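/- Let (u, π, v, θ) be a smooth solution of the stationary 3D tropical climate model. Assume that as |x| → +∞: |x|^{2/3}|u(x)| → 0, |x|^{4/3}|v(x)| remains bounded, and |x|^{2/3}|θ(x)| → 0 (that is, u(x) = o(|x|^{−2/3}), v(x) = O(|x|^{−4/3}), θ(x) = o(|x|^{−2/3})). Then u = 0, v = 0 and θ = 0 identically on ℝ³. -/

import Mathlib

open MeasureTheory Filter Metric

noncomputable section

abbrev R3 : Type := EuclideanSpace ℝ (Fin 3)

/-- Partial derivative of `f` in the `j`-th coordinate direction. -/
def pd (f : R3 → ℝ) (j : Fin 3) (x : R3) : ℝ :=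
  fderiv ℝ f x (EuclideanSpace.single j 1)

/-- Laplacian of `f`. -/
def lap (f : R3 → ℝ) (x : R3) : ℝ := ∑ j, pd (pd f j) j x

/-- The stationary 3D tropical climate model:
`-Δu + (u·∇)u + ∇π + div(v⊗v) = 0`, `-Δv + (u·∇)v + ∇θ + (v·∇)u = 0`,
`-Δθ + u·∇θ + div v = 0`, `div u = 0`. -/
def TCM (u v : R3 → R3) (pr θ : R3 → ℝ) : Prop :=
  (∀ i x, -lap (fun y => u y i) x + (∑ j, u x j * pd (fun y => u y i) j x)
      + pd pr i x + (∑ j, pd (fun y => v y j * v y i) j x) = 0) ∧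
  (∀ i x, -lap (fun y => v y i) x + (∑ j, u x j * pd (fun y => v y i) j x)
      + pd θ i x + (∑ j, v x j * pd (fun y => u y i) j x) = 0) ∧
  (∀ x, -lap θ x + (∑ j, u x j * pd θ j x) + (∑ j, pd (fun y => v y j) j x) = 0) ∧
  (∀ x, (∑ j, pd (fun y => u y j) j x) = 0)

/-!
The dissipation over a ball of radius `R` is estimated by the local energy inequality, which after
rescaling to the unit ball carries the viscosity `1 / R`. Only the values of the fields on an
annulus enter: the pressure is controlled there modulo constants by testing the Stokes system
against truncated Newtonian potentials. With decay of order `2/3` the cubic terms are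
scale-invariant, so the smallness of `u` and of `θ v` at infinity makes the dissipation tend to `0`
as `R → ∞`. Hence all gradients vanish, and the fields are constants that decay.
-/

open scoped ContDiff Convolution Topology Pointwise InnerProductSpace

/-! ### Partial derivatives of smooth functions -/

/-- Real-valued `C^∞` functions on `ℝ³`. -/
abbrev Smooth (f : R3 → ℝ) : Prop := ContDiff ℝ ∞ f

namespace Smooth

variable {f : R3 → ℝ}

lemma differentiableAt (hf : Smooth f) (x : R3) : DifferentiableAt ℝ f x :=
  hf.differentiable (by simp) x

lemma pd (hf : Smooth f) (j : Fin 3) : Smooth (pd f j) :=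
  (hf.fderiv_right (m := ∞) (by simp)).clm_apply contDiff_const

lemma lap (hf : Smooth f) : Smooth (lap f) :=
  ContDiff.sum fun j _ => (hf.pd j).pd j

end Smooth

section PartialDerivatives

variable {f g : R3 → ℝ} {x : R3}

lemma pd_add (hf : DifferentiableAt ℝ f x) (hg : DifferentiableAt ℝ g x) (j : Fin 3) :
    pd (fun y => f y + g y) j x = pd f j x + pd g j x := by
  simp [pd, fderiv_fun_add hf hg]

lemma pd_sub (hf : DifferentiableAt ℝ f x) (hg : DifferentiableAt ℝ g x) (j : Fin 3) :
    pd (fun y => f y - g y) j x = pd f j x - pd g j x := by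
  simp [pd, fderiv_fun_sub hf hg]

lemma pd_mul (hf : DifferentiableAt ℝ f x) (hg : DifferentiableAt ℝ g x) (j : Fin 3) :
    pd (fun y => f y * g y) j x = pd f j x * g x + f x * pd g j x := by
  simp [pd, fderiv_fun_mul hf hg, mul_comm, add_comm]

lemma pd_sq (hf : DifferentiableAt ℝ f x) (j : Fin 3) :
    pd (fun y => f y ^ 2) j x = 2 * (f x * pd f j x) := by
  simp only [sq, pd_mul hf hf]
  ring

lemma pd_const_mul (hf : DifferentiableAt ℝ f x) (c : ℝ) (j : Fin 3) :
    pd (fun y => c * f y) j x = c * pd f j x := by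
  simp [pd, fderiv_const_mul hf]

lemma pd_sum {ι : Type*} {s : Finset ι} {F : ι → R3 → ℝ}
    (hF : ∀ i ∈ s, DifferentiableAt ℝ (F i) x) (j : Fin 3) :
    pd (fun y => ∑ i ∈ s, F i y) j x = ∑ i ∈ s, pd (F i) j x := by
  simp [pd, fderiv_fun_sum hF]

lemma pd_comp_smul (f : R3 → ℝ) (c : ℝ) (j : Fin 3) (x : R3) :
    pd (fun y => f (c • y)) j x = c * pd f j (c • x) := by
  simp [pd, fderiv_comp_smul]

lemma pd_comp_const_sub (f : R3 → ℝ) (a : R3) (j : Fin 3) (x : R3) :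
    pd (fun y => f (a - y)) j x = -pd f j (a - x) := by
  have h := pd_comp_smul (fun z => f (a + z)) (-1) j x
  simpa [pd, fderiv_comp_add_left, ← sub_eq_add_neg] using h

lemma pd_comm (hf : Smooth f) (i j : Fin 3) (x : R3) : pd (pd f i) j x = pd (pd f j) i x := by
  have hd : DifferentiableAt ℝ (fderiv ℝ f) x :=
    (hf.fderiv_right (m := ∞) (by simp)).differentiable (by simp) x
  have second (a b : Fin 3) : pd (pd f a) b x
      = fderiv ℝ (fderiv ℝ f) x (EuclideanSpace.single b 1) (EuclideanSpace.single a 1) := by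
    change fderiv ℝ (fun y => fderiv ℝ f y (EuclideanSpace.single a 1)) x _ = _
    simp [fderiv_clm_apply hd (differentiableAt_const _)]
  rw [second, second]
  refine (hf.contDiffAt.isSymmSndFDerivAt ?_) _ _
  rw [minSmoothness_of_isRCLikeNormedField]
  exact WithTop.coe_le_coe.2 (le_top : (2 : ℕ∞) ≤ ⊤)

lemma pd_pd_pd_swap (hf : Smooth f) (i j : Fin 3) (x : R3) :
    pd (pd (pd f i) j) j x = pd (pd (pd f j) j) i x := by
  rw [funext (pd_comm hf i j), pd_comm (hf.pd j) i j]

lemma fderiv_apply_eq_sum_pd (f : R3 → ℝ) (x w : R3) : fderiv ℝ f x w = ∑ j, w j * pd f j x := by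
  have hw : w = ∑ j, w j • (EuclideanSpace.single j (1 : ℝ) : R3) := by
    simpa using ((EuclideanSpace.basisFun (Fin 3) ℝ).sum_repr w).symm
  conv_lhs => rw [hw]
  simp [pd]

lemma norm_fderiv_le_sum_abs_pd (f : R3 → ℝ) (x : R3) : ‖fderiv ℝ f x‖ ≤ ∑ j, |pd f j x| := by
  refine ContinuousLinearMap.opNorm_le_bound _ (by positivity) fun w => ?_
  rw [fderiv_apply_eq_sum_pd, Finset.sum_mul]
  refine (norm_sum_le _ _).trans (Finset.sum_le_sum fun j _ => ?_)
  rw [norm_mul, mul_comm]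
  exact mul_le_mul_of_nonneg_left (PiLp.norm_apply_le w j) (abs_nonneg _)

lemma fderiv_eq_zero_of_pd_eq_zero (h : ∀ j, pd f j x = 0) : fderiv ℝ f x = 0 := by
  ext w
  simp [fderiv_apply_eq_sum_pd, h]

lemma tsupport_pd_subset (f : R3 → ℝ) (j : Fin 3) : tsupport (pd f j) ⊆ tsupport f :=
  tsupport_fderiv_apply_subset ℝ _

lemma exists_mem_tsupport_pd_of_lap_ne_zero (h : lap f x ≠ 0) : ∃ j, x ∈ tsupport (pd f j) := by
  obtain ⟨j, -, hj⟩ := Finset.exists_ne_zero_of_sum_ne_zero h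
  exact ⟨j, tsupport_pd_subset _ j (subset_tsupport _ hj)⟩

lemma tsupport_lap_subset (f : R3 → ℝ) : tsupport (lap f) ⊆ tsupport f :=
  closure_minimal (fun _ hx => (exists_mem_tsupport_pd_of_lap_ne_zero hx).elim fun j hj =>
    tsupport_pd_subset f j hj) (isClosed_tsupport f)

lemma hasCompactSupport_pd (hf : HasCompactSupport f) (j : Fin 3) : HasCompactSupport (pd f j) :=
  hf.fderiv_apply ℝ _

lemma hasCompactSupport_lap (hf : HasCompactSupport f) : HasCompactSupport (lap f) :=
  hf.of_isClosed_subset (isClosed_tsupport _) (tsupport_lap_subset f)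

end PartialDerivatives

section Laplacian

variable {f g : R3 → ℝ}

lemma lap_add (hf : Smooth f) (hg : Smooth g) (x : R3) :
    lap (fun y => f y + g y) x = lap f x + lap g x := by
  have h (j : Fin 3) : pd (fun y => f y + g y) j = fun y => pd f j y + pd g j y :=
    funext fun y => pd_add (hf.differentiableAt y) (hg.differentiableAt y) j
  simp only [lap, h, ← Finset.sum_add_distrib,
    fun j => pd_add ((hf.pd j).differentiableAt x) ((hg.pd j).differentiableAt x) j]

lemma lap_sum {ι : Type*} {s : Finset ι} {F : ι → R3 → ℝ} (hF : ∀ i ∈ s, Smooth (F i)) (x : R3) :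
    lap (fun y => ∑ i ∈ s, F i y) x = ∑ i ∈ s, lap (F i) x := by
  have h (j : Fin 3) : pd (fun y => ∑ i ∈ s, F i y) j = fun y => ∑ i ∈ s, pd (F i) j y :=
    funext fun y => pd_sum (fun i hi => (hF i hi).differentiableAt y) j
  simp only [lap, h, fun j => pd_sum (fun i hi => ((hF i hi).pd j).differentiableAt x) j]
  exact Finset.sum_comm

lemma lap_sub (hf : Smooth f) (hg : Smooth g) (x : R3) :
    lap (fun y => f y - g y) x = lap f x - lap g x := by
  have h (j : Fin 3) : pd (fun y => f y - g y) j = fun y => pd f j y - pd g j y :=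
    funext fun y => pd_sub (hf.differentiableAt y) (hg.differentiableAt y) j
  simp only [lap, h, ← Finset.sum_sub_distrib,
    fun j => pd_sub ((hf.pd j).differentiableAt x) ((hg.pd j).differentiableAt x) j]

lemma lap_const_mul (hf : Smooth f) (c : ℝ) (x : R3) :
    lap (fun y => c * f y) x = c * lap f x := by
  have h (j : Fin 3) : pd (fun y => c * f y) j = fun y => c * pd f j y :=
    funext fun y => pd_const_mul (hf.differentiableAt y) c j
  simp only [lap, h, Finset.mul_sum,
    fun j => pd_const_mul ((hf.pd j).differentiableAt x) c j]

lemma lap_comp_smul (hf : Smooth f) (c : ℝ) (x : R3) :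
    lap (fun y => f (c • y)) x = c ^ 2 * lap f (c • x) := by
  have h (j : Fin 3) : pd (fun y => f (c • y)) j = fun y => c * pd f j (c • y) :=
    funext (pd_comp_smul f c j)
  have hd (j : Fin 3) : Smooth fun y => pd f j (c • y) := (hf.pd j).comp (contDiff_const_smul c)
  simp only [lap, h, Finset.mul_sum, fun j => pd_const_mul ((hd j).differentiableAt x) c j,
    pd_comp_smul, sq, mul_assoc]

lemma lap_comp_const_sub (f : R3 → ℝ) (a x : R3) :
    lap (fun y => f (a - y)) x = lap f (a - x) := by
  have h (j : Fin 3) : pd (fun y => f (a - y)) j = fun y => -pd f j (a - y) :=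
    funext (pd_comp_const_sub f a j)
  have hneg (g : R3 → ℝ) (j : Fin 3) : pd (fun y => -g y) j x = -pd g j x := by
    simp [pd, fderiv_fun_neg]
  simp only [lap, h, hneg, pd_comp_const_sub, neg_neg]

/-- The squared gradient norm `|∇f|²`. -/
def gradSq (f : R3 → ℝ) (x : R3) : ℝ := ∑ j, pd f j x ^ 2

lemma gradSq_nonneg (f : R3 → ℝ) (x : R3) : 0 ≤ gradSq f x :=
  Finset.sum_nonneg fun _ _ => sq_nonneg _

lemma pd_eq_zero_of_gradSq_eq_zero {x : R3} (h : gradSq f x = 0) (j : Fin 3) : pd f j x = 0 :=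
  pow_eq_zero_iff two_ne_zero |>.1 <|
    (Finset.sum_eq_zero_iff_of_nonneg fun _ _ => sq_nonneg _).1 h j (Finset.mem_univ j)

lemma gradSq_comp_smul (f : R3 → ℝ) (c : ℝ) (x : R3) :
    gradSq (fun y => f (c • y)) x = c ^ 2 * gradSq f (c • x) := by
  simp only [gradSq, pd_comp_smul, mul_pow, Finset.mul_sum]

lemma Smooth.continuous_gradSq (hf : Smooth f) : Continuous (gradSq f) :=
  continuous_finsetSum _ fun j _ => (hf.pd j).continuous.pow 2

lemma lap_sq (hf : Smooth f) (x : R3) :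
    lap (fun y => f y ^ 2) x = 2 * f x * lap f x + 2 * gradSq f x := by
  have h (j : Fin 3) : pd (fun y => f y ^ 2) j = fun y => 2 * (f y * pd f j y) :=
    funext fun y => pd_sq (hf.differentiableAt y) j
  have hd (j : Fin 3) : Smooth fun y => f y * pd f j y := hf.mul (hf.pd j)
  simp only [lap, gradSq, h, Finset.mul_sum, ← Finset.sum_add_distrib,
    fun j => pd_const_mul ((hd j).differentiableAt x) 2 j,
    fun j => pd_mul (hf.differentiableAt x) ((hf.pd j).differentiableAt x) j]
  exact Finset.sum_congr rfl fun j _ => by ring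

end Laplacian

/-! ### Annuli and oscillation -/

section Annulus

variable {E : Type*} [NormedAddCommGroup E] {r s : ℝ}

/-- The closed annulus of inner radius `r` and outer radius `s` centred at the origin. -/
def annulus (r s : ℝ) : Set E := {x | r ≤ ‖x‖ ∧ ‖x‖ ≤ s}

lemma isClosed_annulus : IsClosed (annulus r s : Set E) :=
  (isClosed_le continuous_const continuous_norm).inter
    (isClosed_le continuous_norm continuous_const)

lemma annulus_subset_closedBall : (annulus r s : Set E) ⊆ closedBall 0 s :=
  fun _ hx => mem_closedBall_zero_iff.2 hx.2

lemma isCompact_annulus [ProperSpace E] : IsCompact (annulus r s : Set E) :=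
  (isCompact_closedBall 0 s).of_isClosed_subset isClosed_annulus annulus_subset_closedBall

lemma annulus_subset_annulus {r' s' : ℝ} (hr : r' ≤ r) (hs : s ≤ s') :
    (annulus r s : Set E) ⊆ annulus r' s' :=
  fun _ hx => ⟨hr.trans hx.1, hx.2.trans hs⟩

lemma annulus_add_closedBall_subset (δ : ℝ) :
    (annulus r s : Set E) + closedBall 0 δ ⊆ annulus (r - δ) (s + δ) := by
  rintro _ ⟨x, hx, z, hz, rfl⟩
  have hz' : ‖z‖ ≤ δ := mem_closedBall_zero_iff.1 hz
  refine ⟨?_, (norm_add_le x z).trans (add_le_add hx.2 hz')⟩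
  linarith [norm_sub_le_norm_add x z, hx.1]

end Annulus

section Oscillation

variable {E F : Type*} [NormedAddCommGroup E] [InnerProductSpace ℝ E]
  [NormedAddCommGroup F] [NormedSpace ℝ F] {r s K : ℝ}

lemma half_le_norm_of_mem_segment {x q y : E} (hx : r ≤ ‖x‖) (hq : r ≤ ‖q‖)
    (hxq : 0 ≤ ⟪x, q⟫_ℝ) (hy : y ∈ segment ℝ x q) : r / 2 ≤ ‖y‖ := by
  rcases le_or_gt r 0 with hr | hr
  · linarith [norm_nonneg y]
  obtain ⟨a, b, ha, hb, hab, rfl⟩ := hy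
  have expand : ‖a • x + b • q‖ ^ 2
      = a ^ 2 * ‖x‖ ^ 2 + 2 * (a * b * ⟪x, q⟫_ℝ) + b ^ 2 * ‖q‖ ^ 2 := by
    simp only [norm_add_sq_real, norm_smul, mul_pow, Real.norm_eq_abs, sq_abs,
      real_inner_smul_left, real_inner_smul_right]
    ring
  have weights : 1 / 2 ≤ a ^ 2 + b ^ 2 := by nlinarith [sq_nonneg (a - b)]
  have square : (r / 2) ^ 2 ≤ ‖a • x + b • q‖ ^ 2 := by
    calc (r / 2) ^ 2 ≤ a ^ 2 * r ^ 2 + 0 + b ^ 2 * r ^ 2 := by nlinarith [sq_nonneg r]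
      _ ≤ _ := by rw [expand]; gcongr; positivity
  exact le_of_sq_le_sq square (norm_nonneg _)

lemma norm_sub_le_of_norm_fderiv_le_segment {h : E → F} (hh : Differentiable ℝ h)
    (hK : ∀ y ∈ annulus (r / 2) s, ‖fderiv ℝ h y‖ ≤ K) {x q : E} (hx : x ∈ annulus r s)
    (hq : q ∈ annulus r s) (hxq : 0 ≤ ⟪x, q⟫_ℝ) : ‖h x - h q‖ ≤ 2 * s * K := by
  have hseg : segment ℝ x q ⊆ annulus (r / 2) s := fun y hy =>
    ⟨half_le_norm_of_mem_segment hx.1 hq.1 hxq hy, mem_closedBall_zero_iff.1 <|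
      (convex_closedBall (0 : E) s).segment_subset (annulus_subset_closedBall hx)
        (annulus_subset_closedBall hq) hy⟩
  have hK0 : 0 ≤ K :=
    (norm_nonneg _).trans (hK x (hseg (left_mem_segment ℝ x q)))
  have mean_value := (convex_segment x q).norm_image_sub_le_of_norm_fderiv_le
    (fun y _ => hh y) (fun y hy => hK y (hseg hy)) (right_mem_segment ℝ x q)
    (left_mem_segment ℝ x q)
  have hdist : ‖x - q‖ ≤ 2 * s := by linarith [norm_sub_le x q, hx.2, hq.2]
  calc ‖h x - h q‖ ≤ K * ‖x - q‖ := mean_value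
    _ ≤ 2 * s * K := by nlinarith

lemma exists_norm_eq_inner_eq_zero (hE : 1 < Module.rank ℝ E) (y : E) (hr : 0 ≤ r) :
    ∃ q : E, ‖q‖ = r ∧ ⟪q, y⟫_ℝ = 0 := by
  have proper : (ℝ ∙ y) ≠ ⊤ := fun h => by
    have := rank_span_le (R := ℝ) ({y} : Set E)
    rw [h, rank_top, Cardinal.mk_singleton] at this
    exact hE.not_ge this
  obtain ⟨q, hq, hq0⟩ := Submodule.exists_mem_ne_zero_of_ne_bot
    (mt (Submodule.orthogonal_eq_bot_iff).1 proper)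
  refine ⟨(r / ‖q‖) • q, ?_, ?_⟩
  · rw [norm_smul, Real.norm_of_nonneg (by positivity), div_mul_cancel₀ _ (norm_ne_zero_iff.2 hq0)]
  · rw [real_inner_smul_left, real_inner_comm,
      Submodule.mem_orthogonal_singleton_iff_inner_right.1 hq, mul_zero]

lemma norm_sub_le_of_norm_fderiv_le_annulus (hE : 1 < Module.rank ℝ E) (hr : 0 ≤ r) {h : E → F}
    (hh : Differentiable ℝ h) (hK : ∀ y ∈ annulus (r / 2) s, ‖fderiv ℝ h y‖ ≤ K) {x y : E}
    (hx : x ∈ annulus r s) (hy : y ∈ annulus r s) : ‖h x - h y‖ ≤ 4 * s * K := by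
  obtain ⟨q, hqr, hqy, hxq⟩ : ∃ q : E, ‖q‖ = r ∧ ⟪q, y⟫_ℝ = 0 ∧ 0 ≤ ⟪x, q⟫_ℝ := by
    obtain ⟨q, hqr, hqy⟩ := exists_norm_eq_inner_eq_zero hE y hr
    rcases le_total 0 ⟪x, q⟫_ℝ with h | h
    · exact ⟨q, hqr, hqy, h⟩
    · exact ⟨-q, by simpa using hqr, by simpa using hqy, by simpa using h⟩
  have hq : q ∈ annulus r s := ⟨hqr.ge, hqr.le.trans (hx.1.trans hx.2)⟩
  linarith [norm_sub_le_norm_sub_add_norm_sub (h x) (h q) (h y),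
    norm_sub_le_of_norm_fderiv_le_segment hh hK hx hq hxq,
    norm_sub_le_of_norm_fderiv_le_segment hh hK hq hy hqy.ge]

end Oscillation

/-! ### Integration by parts -/

lemma abs_integral_mul_le {α : Type*} {_ : MeasurableSpace α} {μ : Measure α} {f k : α → ℝ} {a : ℝ}
    (hk : Integrable k μ) (hf : ∀ x, k x ≠ 0 → |f x| ≤ a) :
    |∫ x, f x * k x ∂μ| ≤ a * ∫ x, |k x| ∂μ := by
  rw [← integral_const_mul, ← Real.norm_eq_abs]
  refine norm_integral_le_of_norm_le (hk.abs.const_mul a) (.of_forall fun x => ?_)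
  rw [norm_mul, Real.norm_eq_abs, Real.norm_eq_abs]
  by_cases hx : k x = 0
  · simp [hx]
  · exact mul_le_mul_of_nonneg_right (hf x hx) (abs_nonneg _)

lemma integrable_mul_of_hasCompactSupport {α : Type*} [TopologicalSpace α] [MeasurableSpace α]
    [OpensMeasurableSpace α] {μ : Measure α} [IsFiniteMeasureOnCompacts μ] {f g : α → ℝ}
    (hf : Continuous f) (hg : Continuous g) (hgc : HasCompactSupport g) :
    Integrable (fun x => f x * g x) μ :=
  (hf.mul hg).integrable_of_hasCompactSupport hgc.mul_left

section IntegrationByParts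

variable {f g : R3 → ℝ}

lemma integral_mul_pd (hf : Smooth f) (hg : Smooth g) (hgc : HasCompactSupport g) (j : Fin 3) :
    ∫ x, f x * pd g j x = -∫ x, pd f j x * g x :=
  integral_mul_fderiv_eq_neg_fderiv_mul_of_integrable
    (integrable_mul_of_hasCompactSupport (hf.pd j).continuous hg.continuous hgc)
    (integrable_mul_of_hasCompactSupport hf.continuous (hg.pd j).continuous
      (hasCompactSupport_pd hgc j))
    (integrable_mul_of_hasCompactSupport hf.continuous hg.continuous hgc)
    (fun x _ => hf.differentiableAt x) (fun x _ => hg.differentiableAt x)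

lemma sum_integral_mul_pd {K : Fin 3 → R3 → ℝ} (hK : ∀ j, Smooth (K j)) (hg : Smooth g)
    (hgc : HasCompactSupport g) :
    ∑ j, ∫ x, K j x * pd g j x = -∫ x, (∑ j, pd (K j) j x) * g x := by
  simp only [fun j => integral_mul_pd (hK j) hg hgc j, Finset.sum_neg_distrib, Finset.sum_mul]
  rw [integral_finsetSum _ fun j _ =>
    integrable_mul_of_hasCompactSupport ((hK j).pd j).continuous hg.continuous hgc]

lemma integral_mul_lap (hf : Smooth f) (hg : Smooth g) (hgc : HasCompactSupport g) :
    ∫ x, f x * lap g x = ∫ x, lap f x * g x := by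
  have twice (j : Fin 3) : ∫ x, f x * pd (pd g j) j x = ∫ x, pd (pd f j) j x * g x := by
    rw [integral_mul_pd hf (hg.pd j) (hasCompactSupport_pd hgc j) j,
      integral_mul_pd (hf.pd j) hg hgc j, neg_neg]
  simp only [lap, Finset.mul_sum, Finset.sum_mul]
  rw [integral_finsetSum _ fun j _ => integrable_mul_of_hasCompactSupport hf.continuous
      ((hg.pd j).pd j).continuous (hasCompactSupport_pd (hasCompactSupport_pd hgc j) j),
    integral_finsetSum _ fun j _ => integrable_mul_of_hasCompactSupport
      ((hf.pd j).pd j).continuous hg.continuous hgc]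
  exact Finset.sum_congr rfl fun j _ => twice j

lemma integral_sum_hessian_sq (hg : Smooth g) (hgc : HasCompactSupport g) :
    ∫ x, ∑ i, ∑ j, pd (pd g i) j x ^ 2 = ∫ x, lap g x ^ 2 := by
  have swap (i j : Fin 3) :
      ∫ x, pd (pd g i) j x ^ 2 = ∫ x, pd (pd g j) j x * pd (pd g i) i x := by
    simp only [sq]
    rw [integral_mul_pd ((hg.pd i).pd j) (hg.pd i) (hasCompactSupport_pd hgc i) j,
      integral_mul_pd ((hg.pd j).pd j) (hg.pd i) (hasCompactSupport_pd hgc i) i]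
    simp only [pd_pd_pd_swap hg i j]
  have hint (i j k l : Fin 3) : Integrable fun x => pd (pd g i) j x * pd (pd g k) l x :=
    integrable_mul_of_hasCompactSupport ((hg.pd i).pd j).continuous ((hg.pd k).pd l).continuous
      (hasCompactSupport_pd (hasCompactSupport_pd hgc k) l)
  have square (x : R3) : lap g x ^ 2 = ∑ i, ∑ j, pd (pd g j) j x * pd (pd g i) i x := by
    rw [sq, lap, Finset.sum_mul_sum, Finset.sum_comm]
  have hsq (i j : Fin 3) : Integrable fun x => pd (pd g i) j x ^ 2 := by
    simpa only [sq] using hint i j i j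
  simp only [square]
  rw [integral_finsetSum _ fun i _ => integrable_finsetSum _ fun j _ => hsq i j,
    integral_finsetSum _ fun i _ => integrable_finsetSum _ fun j _ => hint j j i i]
  refine Finset.sum_congr rfl fun i _ => ?_
  rw [integral_finsetSum _ fun j _ => hsq i j, integral_finsetSum _ fun j _ => hint j j i i]
  exact Finset.sum_congr rfl fun j _ => swap i j

end IntegrationByParts

/-! ### Convolution -/

section Convolution

variable {E : Type*} [NormedAddCommGroup E] [MeasureSpace E] {f G p : E → ℝ}

lemma tsupport_convolution_subset_annulus {r s δ : ℝ} (hf : tsupport f ⊆ annulus r s)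
    (hG : tsupport G ⊆ closedBall 0 δ) : tsupport (f ⋆ G) ⊆ annulus (r - δ) (s + δ) :=
  closure_minimal ((support_convolution_subset _).trans <|
    (Set.add_subset_add ((subset_tsupport f).trans hf) ((subset_tsupport G).trans hG)).trans
      (annulus_add_closedBall_subset δ)) isClosed_annulus

lemma integrable_mul_comp_const_sub [BorelSpace E] [IsFiniteMeasureOnCompacts (volume : Measure E)]
    (hf : Continuous f) (hG : Continuous G) (hGc : HasCompactSupport G) (x : E) :
    Integrable fun t => f t * G (x - t) :=
  integrable_mul_of_hasCompactSupport hf (by fun_prop)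
    (hGc.comp_homeomorph (Homeomorph.subLeft x))

lemma abs_convolution_le [BorelSpace E] [IsFiniteMeasureOnCompacts (volume : Measure E)]
    [(volume : Measure E).IsNegInvariant] [(volume : Measure E).IsAddLeftInvariant] {m : ℝ}
    (hf : ∀ x, |f x| ≤ m) (hG : Continuous G) (hGc : HasCompactSupport G) (x : E) :
    |(f ⋆ G) x| ≤ m * ∫ z, |G z| := by
  have hint : Integrable fun t => G (x - t) := by
    simpa using integrable_mul_comp_const_sub (f := fun _ => 1) continuous_const hG hGc x
  rw [← integral_sub_left_eq_self (fun z => |G z|) volume x]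
  exact abs_integral_mul_le hint fun t _ => hf t

lemma integral_mul_convolution [BorelSpace E] [IsFiniteMeasureOnCompacts (volume : Measure E)]
    (hp : Continuous p) (hf : Continuous f) (hG : Continuous G) (hfc : HasCompactSupport f)
    (hGc : HasCompactSupport G) (hGeven : ∀ z, G (-z) = G z) :
    ∫ x, p x * (f ⋆ G) x = ∫ x, f x * (p ⋆ G) x := by
  have compact : HasCompactSupport (Function.uncurry fun x t => p x * (f t * G (x - t))) := by
    refine .intro ((hfc.isCompact.prod hGc.isCompact).image
      (f := fun q : E × E => (q.1 + q.2, q.1)) (by fun_prop)) ?_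
    rintro ⟨x, t⟩ hxt
    by_contra hne
    have hfG : f t ≠ 0 ∧ G (x - t) ≠ 0 := by
      constructor <;> intro h <;> simp [h] at hne
    exact hxt ⟨(t, x - t), ⟨subset_tsupport _ hfG.1, subset_tsupport _ hfG.2⟩, by simp⟩
  calc ∫ x, p x * (f ⋆ G) x = ∫ x, ∫ t, p x * (f t * G (x - t)) := by
        simp only [integral_const_mul]; rfl
    _ = ∫ t, ∫ x, p x * (f t * G (x - t)) :=
        integral_integral_swap_of_hasCompactSupport (by fun_prop) compact
    _ = ∫ t, f t * (p ⋆ G) t := by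
        congr with t
        rw [convolution_def, ← integral_const_mul]
        congr with x
        rw [← hGeven, neg_sub, ContinuousLinearMap.lsmul_apply, smul_eq_mul, mul_left_comm]

end Convolution

section SmoothConvolution

variable {f G : R3 → ℝ}

lemma Smooth.convolution (hf : Continuous f) (hG : Smooth G) (hGc : HasCompactSupport G) :
    Smooth (f ⋆ G) :=
  hGc.contDiff_convolution_right _ hf.locallyIntegrable hG

lemma pd_convolution (hf : Continuous f) (hG : Smooth G) (hGc : HasCompactSupport G) (j : Fin 3) :
    pd (f ⋆ G) j = f ⋆ pd G j := by
  have hG1 : ContDiff ℝ 1 G := hG.of_le (by exact_mod_cast le_top)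
  funext x
  rw [pd, (hGc.hasFDerivAt_convolution_right _ hf.locallyIntegrable hG1 x).fderiv,
    convolution_precompR_apply _ hf.locallyIntegrable (hGc.fderiv ℝ)
      (hG1.continuous_fderiv one_ne_zero)]
  rfl

lemma lap_convolution (hf : Continuous f) (hG : Smooth G) (hGc : HasCompactSupport G) :
    lap (f ⋆ G) = f ⋆ lap G := by
  funext x
  have hGcj (j : Fin 3) := hasCompactSupport_pd hGc j
  simp only [lap, pd_convolution hf hG hGc, fun j => pd_convolution hf (hG.pd j) (hGcj j) j]
  change ∑ j, ∫ t, f t * pd (pd G j) j (x - t) = ∫ t, f t * ∑ j, pd (pd G j) j (x - t)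
  simp only [Finset.mul_sum]
  exact (integral_finsetSum _ fun j _ => integrable_mul_comp_const_sub hf
    ((hG.pd j).pd j).continuous (hasCompactSupport_pd (hGcj j) j) x).symm

end SmoothConvolution

section Dilation

variable {E : Type*} [NormedAddCommGroup E] [NormedSpace ℝ E]

/-- The dilation `z ↦ s⁻ⁿ G (s⁻¹ z)`, `n = dim E`, normalised so as to preserve the integral. -/
def dilate (s : ℝ) (G : E → ℝ) (z : E) : ℝ := (s ^ Module.finrank ℝ E)⁻¹ * G (s⁻¹ • z)

variable [FiniteDimensional ℝ E] [MeasureSpace E] [BorelSpace E]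
  [(volume : Measure E).IsAddHaarMeasure] {s : ℝ} {f p G : E → ℝ}

lemma integral_dilate (hs : 0 < s) (G : E → ℝ) : ∫ z, dilate s G z = ∫ z, G z := by
  simp only [dilate]
  rw [integral_const_mul, Measure.integral_comp_inv_smul_of_nonneg _ _ hs.le, smul_eq_mul,
    inv_mul_cancel_left₀ (pow_pos hs _).ne']

lemma integral_abs_dilate (hs : 0 < s) (G : E → ℝ) : ∫ z, |dilate s G z| = ∫ z, |G z| := by
  rw [← integral_dilate hs fun z => |G z|]
  simp only [dilate, abs_mul, abs_of_pos (inv_pos.2 (pow_pos hs _))]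

lemma convolution_dilate (hs : 0 < s) (f G : E → ℝ) (x : E) :
    (f ⋆ dilate s G) x = ∫ y, f (x - s • y) * G y := by
  rw [convolution_lsmul_swap, ← integral_dilate hs fun y => f (x - s • y) * G y]
  congr with t
  rw [dilate, dilate, smul_inv_smul₀ hs.ne', smul_eq_mul, mul_left_comm]

lemma tendsto_integral_mul_convolution_dilate (hf : Continuous f) (hp : Continuous p)
    (hG : Continuous G) (hfc : HasCompactSupport f) (hGc : HasCompactSupport G) :
    Tendsto (fun s => ∫ x, f x * (p ⋆ dilate s G) x) (𝓝[>] 0)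
      (𝓝 ((∫ z, G z) * ∫ x, p x * f x)) := by
  have inner_continuous : Continuous fun q : ℝ × E => ∫ y in tsupport G, p (q.2 - q.1 • y) * G y :=
    continuous_parametric_integral_of_continuous (by fun_prop) hGc.isCompact
  have outer_continuous : Continuous fun s : ℝ =>
      ∫ x in tsupport f, f x * ∫ y in tsupport G, p (x - s • y) * G y :=
    continuous_parametric_integral_of_continuous (by fun_prop) hfc.isCompact
  have restrict_G (s : ℝ) (x : E) :
      ∫ y in tsupport G, p (x - s • y) * G y = ∫ y, p (x - s • y) * G y :=
    setIntegral_eq_integral_of_forall_compl_eq_zero fun y hy => by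
      rw [image_eq_zero_of_notMem_tsupport hy, mul_zero]
  have restrict_f (k : E → ℝ) : ∫ x in tsupport f, f x * k x = ∫ x, f x * k x :=
    setIntegral_eq_integral_of_forall_compl_eq_zero fun x hx => by
      rw [image_eq_zero_of_notMem_tsupport hx, zero_mul]
  simp only [restrict_G, restrict_f] at outer_continuous
  have value : ∫ x, f x * ∫ y, p (x - (0 : ℝ) • y) * G y = (∫ z, G z) * ∫ x, p x * f x := by
    simp only [zero_smul, sub_zero, integral_const_mul, ← mul_assoc, integral_mul_const]
    simp only [mul_comm]
  rw [← value]
  refine (outer_continuous.tendsto 0 |>.mono_left nhdsWithin_le_nhds).congr' ?_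
  filter_upwards [self_mem_nhdsWithin] with s hs
  simp only [convolution_dilate (Set.mem_Ioi.1 hs)]

end Dilation

/-! ### A mollifier that is the Laplacian of a regularised Newtonian potential -/

section Radial

variable {ψ : ℝ → ℝ}

lemma Smooth.comp_norm_sq (hψ : ContDiff ℝ ∞ ψ) : Smooth fun z => ψ (‖z‖ ^ 2) :=
  hψ.comp (contDiff_norm_sq ℝ)

lemma contDiff_infty_deriv (hψ : ContDiff ℝ ∞ ψ) : ContDiff ℝ ∞ (deriv ψ) :=
  (contDiff_infty_iff_deriv.1 hψ).2

lemma pd_comp_norm_sq (hψ : Differentiable ℝ ψ) (j : Fin 3) (z : R3) :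
    pd (fun z => ψ (‖z‖ ^ 2)) j z = 2 * (z j * deriv ψ (‖z‖ ^ 2)) := by
  have chain := (hψ (‖z‖ ^ 2)).hasDerivAt.comp_hasFDerivAt z
    (hasStrictFDerivAt_norm_sq z).hasFDerivAt
  change fderiv ℝ (ψ ∘ fun z => ‖z‖ ^ 2) z _ = _
  rw [chain.fderiv]
  simp [EuclideanSpace.inner_single_right]
  ring

lemma lap_comp_norm_sq (hψ : ContDiff ℝ ∞ ψ) (z : R3) :
    lap (fun z => ψ (‖z‖ ^ 2)) z
      = 6 * deriv ψ (‖z‖ ^ 2) + 4 * ‖z‖ ^ 2 * deriv (deriv ψ) (‖z‖ ^ 2) := by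
  have hψ' := contDiff_infty_deriv hψ
  have coord (j : Fin 3) : Smooth fun z : R3 => z j :=
    (EuclideanSpace.proj (𝕜 := ℝ) j).contDiff
  have pd_coord (j : Fin 3) : pd (fun z : R3 => z j) j z = 1 := by
    change fderiv ℝ (EuclideanSpace.proj (𝕜 := ℝ) j : R3 → ℝ) z _ = 1
    rw [ContinuousLinearMap.fderiv]
    simp
  have first (j : Fin 3) : pd (fun z => ψ (‖z‖ ^ 2)) j
      = fun z => 2 * (z j * deriv ψ (‖z‖ ^ 2)) :=
    funext (pd_comp_norm_sq (hψ.differentiable (by simp)) j)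
  have second (j : Fin 3) : pd (pd (fun z => ψ (‖z‖ ^ 2)) j) j z
      = 2 * deriv ψ (‖z‖ ^ 2) + 4 * z j ^ 2 * deriv (deriv ψ) (‖z‖ ^ 2) := by
    have hd : Smooth fun z : R3 => z j * deriv ψ (‖z‖ ^ 2) :=
      (coord j).mul (Smooth.comp_norm_sq hψ')
    rw [first, pd_const_mul (hd.differentiableAt z), pd_mul ((coord j).differentiableAt z)
      ((Smooth.comp_norm_sq hψ').differentiableAt z), pd_coord,
      pd_comp_norm_sq (hψ'.differentiable (by simp))]
    ring
  have norm_sq : ‖z‖ ^ 2 = z 0 ^ 2 + z 1 ^ 2 + z 2 ^ 2 := by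
    simp [EuclideanSpace.norm_sq_eq, Fin.sum_univ_three]
  rw [lap, Fin.sum_univ_three, second, second, second]
  linear_combination (-4 * deriv (deriv ψ) (‖z‖ ^ 2)) * norm_sq

lemma integral_lap_comp_norm_sq (hψ : ContDiff ℝ ∞ ψ)
    (hharm : ∀ t, 1 < t → 6 * deriv ψ t + 4 * t * deriv (deriv ψ) t = 0) :
    ∫ z : R3, lap (fun z => ψ (‖z‖ ^ 2)) z
      = 3 * (volume : Measure R3).real (ball 0 1) * (16 * deriv ψ 4) := by
  set k : ℝ → ℝ := fun y => y ^ 2 * (6 * deriv ψ (y ^ 2) + 4 * y ^ 2 * deriv (deriv ψ) (y ^ 2))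
  have hψ' := contDiff_infty_deriv hψ
  have primitive (y : ℝ) : HasDerivAt (fun y => 2 * y ^ 3 * deriv ψ (y ^ 2)) (k y) y := by
    have hψy : HasDerivAt (deriv ψ) (deriv (deriv ψ) (y ^ 2)) (y ^ 2) :=
      (hψ'.differentiable (by simp) _).hasDerivAt
    refine (((hasDerivAt_pow 3 y).const_mul 2).mul
      (hψy.comp (h := fun y => y ^ 2) y (hasDerivAt_pow 2 y))).congr_deriv ?_
    simp only [k, Function.comp_apply]
    push_cast
    ring
  have hk : Continuous k := by
    have := hψ'.continuous
    have := (contDiff_infty_deriv hψ').continuous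
    fun_prop
  have radial_integral : ∫ y in Set.Ioi (0 : ℝ), k y = 16 * deriv ψ 4 := by
    have truncate : ∫ y in Set.Ioi (0 : ℝ), k y = ∫ y in Set.Ioc (0 : ℝ) 2, k y := by
      refine setIntegral_eq_of_subset_of_forall_sdiff_eq_zero measurableSet_Ioi
        Set.Ioc_subset_Ioi_self fun y hy => ?_
      have hy2 : 2 < y := not_le.1 fun h => hy.2 ⟨hy.1, h⟩
      simp only [k, hharm (y ^ 2) (by nlinarith), mul_zero]
    rw [truncate, ← intervalIntegral.integral_of_le zero_le_two,
      intervalIntegral.integral_eq_sub_of_hasDerivAt (fun y _ => primitive y)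
        (hk.intervalIntegrable _ _)]
    norm_num
  simp only [lap_comp_norm_sq hψ]
  rw [integral_fun_norm_addHaar (volume : Measure R3)
    (fun y => 6 * deriv ψ (y ^ 2) + 4 * y ^ 2 * deriv (deriv ψ) (y ^ 2))]
  simp only [finrank_euclideanSpace, Fintype.card_fin, Nat.add_one_sub_one, smul_eq_mul]
  rw [radial_integral, nsmul_eq_mul, Nat.cast_ofNat, mul_assoc]

end Radial

/-- A smooth function on the line equal to `t ^ (-1/2)` for `1 ≤ t`, so that `smoothRpow (|z|²)` is
a smooth modification of `|z|⁻¹` inside the unit ball. -/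
def smoothRpow (t : ℝ) : ℝ :=
  (t.smoothTransition * t + (1 - t.smoothTransition)) ^ (-1 / 2 : ℝ)

lemma contDiff_smoothRpow : ContDiff ℝ ∞ smoothRpow := by
  have hχ : ContDiff ℝ ∞ Real.smoothTransition := Real.smoothTransition.contDiff
  refine ((hχ.mul contDiff_id).add (contDiff_const.sub hχ)).rpow_const_of_ne fun t => ne_of_gt ?_
  rcases le_or_gt t 0 with ht | ht
  · simp [Real.smoothTransition.zero_of_nonpos ht]
  · rw [id_eq]
    nlinarith [mul_pos (Real.smoothTransition.pos_of_pos ht) ht, Real.smoothTransition.le_one t]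

lemma smoothRpow_of_one_le {t : ℝ} (ht : 1 ≤ t) : smoothRpow t = t ^ (-1 / 2 : ℝ) := by
  simp [smoothRpow, Real.smoothTransition.one_of_one_le ht]

lemma deriv_smoothRpow {t : ℝ} (ht : 1 < t) :
    deriv smoothRpow t = -1 / 2 * t ^ (-3 / 2 : ℝ) := by
  have heq : smoothRpow =ᶠ[𝓝 t] fun t => t ^ (-1 / 2 : ℝ) :=
    (lt_mem_nhds ht).mono fun _ hs => smoothRpow_of_one_le hs.le
  rw [heq.deriv_eq, Real.deriv_rpow_const]
  norm_num

lemma deriv_deriv_smoothRpow {t : ℝ} (ht : 1 < t) :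
    deriv (deriv smoothRpow) t = 3 / 4 * t ^ (-5 / 2 : ℝ) := by
  have heq : deriv smoothRpow =ᶠ[𝓝 t] fun t => -1 / 2 * t ^ (-3 / 2 : ℝ) :=
    (lt_mem_nhds ht).mono fun _ hs => deriv_smoothRpow hs
  rw [heq.deriv_eq, deriv_const_mul_field, Real.deriv_rpow_const]
  norm_num
  ring

lemma smoothRpow_harmonic {t : ℝ} (ht : 1 < t) :
    6 * deriv smoothRpow t + 4 * t * deriv (deriv smoothRpow) t = 0 := by
  have hpow : t ^ (-3 / 2 : ℝ) = t * t ^ (-5 / 2 : ℝ) := by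
    rw [← Real.rpow_one_add' (by positivity) (by norm_num)]
    norm_num
  rw [deriv_smoothRpow ht, deriv_deriv_smoothRpow ht, hpow]
  ring

/-- The total mass of the Laplacian of `z ↦ smoothRpow (|z|²)`; its value is `-4π`. -/
def newtonMass : ℝ := ∫ z : R3, lap (fun z => smoothRpow (‖z‖ ^ 2)) z

lemma newtonMass_ne_zero : newtonMass ≠ 0 := by
  have hball : (volume : Measure R3).real (ball 0 1) ≠ 0 :=
    (measureReal_ne_zero_iff measure_ball_lt_top.ne).2 (measure_ball_pos _ _ one_pos).ne'
  rw [newtonMass, integral_lap_comp_norm_sq contDiff_smoothRpow fun t => smoothRpow_harmonic,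
    deriv_smoothRpow (by norm_num)]
  positivity

/-- A smooth function equal to the Newtonian potential `newtonMass⁻¹ |z|⁻¹` outside the ball of
radius `s`. -/
def newtonReg (s : ℝ) (z : R3) : ℝ := newtonMass⁻¹ * (s⁻¹ * smoothRpow (‖s⁻¹ • z‖ ^ 2))

/-- The mollifier `Δ (newtonReg s)`, which is even, of mean one and supported in the ball of radius
`s`. -/
def mollifier (s : ℝ) : R3 → ℝ := lap (newtonReg s)

section Mollifier

variable {s : ℝ}

lemma smooth_newtonReg (s : ℝ) : Smooth (newtonReg s) :=
  contDiff_const.mul (contDiff_const.mul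
    ((Smooth.comp_norm_sq contDiff_smoothRpow).comp (contDiff_const_smul s⁻¹)))

lemma newtonReg_of_le_norm (hs : 0 < s) {z : R3} (hz : s ≤ ‖z‖) :
    newtonReg s z = newtonMass⁻¹ * ‖z‖⁻¹ := by
  have hz0 : 0 < ‖z‖ := hs.trans_le hz
  have hnorm : ‖s⁻¹ • z‖ = ‖z‖ / s := by
    rw [norm_smul, norm_inv, Real.norm_of_nonneg hs.le, inv_mul_eq_div]
  have hone : 1 ≤ ‖z‖ / s := (one_le_div hs).2 hz
  have hpow : ((‖z‖ / s) ^ 2) ^ (-1 / 2 : ℝ) = s / ‖z‖ := by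
    rw [← Real.rpow_natCast, ← Real.rpow_mul (by positivity), ← inv_div ‖z‖ s, ← Real.rpow_neg_one]
    norm_num
  rw [newtonReg, hnorm, smoothRpow_of_one_le (one_le_pow₀ hone), hpow]
  field_simp

lemma smooth_mollifier (s : ℝ) : Smooth (mollifier s) := (smooth_newtonReg s).lap

lemma mollifier_eq (s : ℝ) (z : R3) : mollifier s z
    = newtonMass⁻¹ * (s⁻¹ ^ 3 * lap (fun z => smoothRpow (‖z‖ ^ 2)) (s⁻¹ • z)) := by
  have hψ := Smooth.comp_norm_sq contDiff_smoothRpow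
  have hψs : Smooth fun z : R3 => smoothRpow (‖s⁻¹ • z‖ ^ 2) := hψ.comp (contDiff_const_smul s⁻¹)
  change lap (fun z => newtonMass⁻¹ * (s⁻¹ * smoothRpow (‖s⁻¹ • z‖ ^ 2))) z = _
  rw [lap_const_mul (contDiff_const.mul hψs), lap_const_mul hψs, lap_comp_smul hψ]
  ring

lemma mollifier_eq_dilate (s : ℝ) : mollifier s = dilate s (mollifier 1) := by
  funext z
  simp only [dilate, mollifier_eq, finrank_euclideanSpace, Fintype.card_fin, inv_one, one_smul,
    one_pow, one_mul, inv_pow]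
  ring

lemma mollifier_neg (s : ℝ) (z : R3) : mollifier s (-z) = mollifier s z := by
  simp only [mollifier_eq, lap_comp_norm_sq contDiff_smoothRpow, smul_neg, norm_neg]

lemma tsupport_mollifier_subset (hs : 0 < s) : tsupport (mollifier s) ⊆ closedBall 0 s := by
  refine closure_minimal (fun z hz => ?_) isClosed_closedBall
  by_contra hzs
  have hnorm : 1 < ‖s⁻¹ • z‖ := by
    rw [norm_smul, norm_inv, Real.norm_of_nonneg hs.le, inv_mul_eq_div, one_lt_div hs]
    simpa using hzs
  refine hz ?_
  rw [mollifier_eq, lap_comp_norm_sq contDiff_smoothRpow, smoothRpow_harmonic (by nlinarith),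
    mul_zero, mul_zero]

lemma hasCompactSupport_mollifier (hs : 0 < s) : HasCompactSupport (mollifier s) :=
  (isCompact_closedBall 0 s).of_isClosed_subset (isClosed_tsupport _) (tsupport_mollifier_subset hs)

lemma integral_mollifier_one : ∫ z, mollifier 1 z = 1 := by
  simp only [mollifier_eq, integral_const_mul, inv_one, one_pow, one_smul, one_mul]
  exact inv_mul_cancel₀ newtonMass_ne_zero

lemma integral_abs_mollifier (hs : 0 < s) : ∫ z, |mollifier s z| = ∫ z, |mollifier 1 z| := by
  rw [mollifier_eq_dilate, integral_abs_dilate hs]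

lemma tsupport_newtonReg_sub_subset {δ : ℝ} (hδ : 0 < δ) (hδs : δ ≤ s) :
    tsupport (fun z => newtonReg s z - newtonReg δ z) ⊆ closedBall 0 s := by
  refine closure_minimal (fun z hz => ?_) isClosed_closedBall
  by_contra hzs
  have hsz : s ≤ ‖z‖ := by simpa using (not_le.1 (mt mem_closedBall_zero_iff.2 hzs)).le
  refine hz ?_
  simp only
  rw [newtonReg_of_le_norm (hδ.trans_le hδs) hsz, newtonReg_of_le_norm hδ (hδs.trans hsz), sub_self]

lemma tendsto_integral_mul_convolution_mollifier {p f : R3 → ℝ} (hp : Continuous p)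
    (hf : Continuous f) (hfc : HasCompactSupport f) :
    Tendsto (fun ε => ∫ x, p x * (f ⋆ mollifier ε) x) (𝓝[>] 0) (𝓝 (∫ x, p x * f x)) := by
  have limit := tendsto_integral_mul_convolution_dilate hf hp (smooth_mollifier 1).continuous hfc
    (hasCompactSupport_mollifier one_pos)
  rw [integral_mollifier_one, one_mul] at limit
  refine limit.congr' ?_
  filter_upwards [self_mem_nhdsWithin] with ε hε
  rw [← mollifier_eq_dilate, integral_mul_convolution hp hf (smooth_mollifier ε).continuous hfc
    (hasCompactSupport_mollifier hε) (mollifier_neg ε)]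

lemma convolution_mollifier_sub {f : R3 → ℝ} {δ : ℝ} (hf : Continuous f) (hδ : 0 < δ)
    (hδs : δ ≤ s) (x : R3) : (f ⋆ mollifier s) x - (f ⋆ mollifier δ) x
      = lap (f ⋆ fun z => newtonReg s z - newtonReg δ z) x := by
  have hc : HasCompactSupport fun z => newtonReg s z - newtonReg δ z :=
    (isCompact_closedBall 0 s).of_isClosed_subset (isClosed_tsupport _)
      (tsupport_newtonReg_sub_subset hδ hδs)
  rw [lap_convolution hf ((smooth_newtonReg s).sub (smooth_newtonReg δ)) hc]
  change (∫ t, f t * mollifier s (x - t)) - (∫ t, f t * mollifier δ (x - t))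
    = ∫ t, f t * lap _ (x - t)
  rw [← integral_sub
    (integrable_mul_comp_const_sub hf (smooth_mollifier s).continuous
      (hasCompactSupport_mollifier (hδ.trans_le hδs)) x)
    (integrable_mul_comp_const_sub hf (smooth_mollifier δ).continuous
      (hasCompactSupport_mollifier hδ) x)]
  simp only [← mul_sub, lap_sub (smooth_newtonReg s) (smooth_newtonReg δ), mollifier]

end Mollifier

/-! ### The pressure of the Stokes system -/

/-- A smooth solution of the Stokes system `∇p = ν ΔU - div F`, `div U = 0`, where
`(div F)ᵢ = ∑ⱼ ∂ⱼ Fᵢⱼ`. -/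
structure StokesSystem (ν : ℝ) (U : Fin 3 → R3 → ℝ) (F : Fin 3 → Fin 3 → R3 → ℝ)
    (p : R3 → ℝ) : Prop where
  smooth_velocity : ∀ i, Smooth (U i)
  smooth_stress : ∀ i j, Smooth (F i j)
  smooth_pressure : Smooth p
  momentum : ∀ i x, pd p i x = ν * lap (U i) x - ∑ j, pd (F i j) j x
  div_velocity : ∀ x, ∑ i, pd (U i) i x = 0

lemma lap_pd {g : R3 → ℝ} (hg : Smooth g) (i : Fin 3) (x : R3) :
    lap (pd g i) x = pd (lap g) i x := by
  change ∑ j, pd (pd (pd g i) j) j x = pd (fun y => ∑ j, pd (pd g j) j y) i x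
  rw [pd_sum fun j _ => ((hg.pd j).pd j).differentiableAt x]
  exact Finset.sum_congr rfl fun j _ => pd_pd_pd_swap hg i j x

lemma pd_pd_eq_zero_of_notMem {g : R3 → ℝ} {K : Set R3} (hgK : tsupport g ⊆ K) {i j : Fin 3}
    {x : R3} (hx : x ∉ K) : pd (pd g i) j x = 0 :=
  image_eq_zero_of_notMem_tsupport fun hx' =>
    hx (hgK (tsupport_pd_subset g i (tsupport_pd_subset _ j hx')))

lemma setIntegral_sum_hessian_sq_le {g : R3 → ℝ} {K : Set R3} {N : ℝ} (hK : IsCompact K)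
    (hg : Smooth g) (hgK : tsupport g ⊆ K) (hlap : ∀ x ∈ K, |lap g x| ≤ N) :
    ∫ x in K, ∑ q : Fin 3 × Fin 3, pd (pd g q.1) q.2 x ^ 2 ≤ N ^ 2 * volume.real K := by
  have hgc : HasCompactSupport g := hK.of_isClosed_subset (isClosed_tsupport g) hgK
  have hout {x : R3} (hx : x ∉ K) (i j : Fin 3) : pd (pd g i) j x = 0 :=
    pd_pd_eq_zero_of_notMem hgK hx
  calc ∫ x in K, ∑ q : Fin 3 × Fin 3, pd (pd g q.1) q.2 x ^ 2
      = ∫ x in K, lap g x ^ 2 := by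
        simp only [Fintype.sum_prod_type]
        rw [setIntegral_eq_integral_of_forall_compl_eq_zero fun x hx => by simp [hout hx],
          setIntegral_eq_integral_of_forall_compl_eq_zero fun x hx => by simp [lap, hout hx],
          integral_sum_hessian_sq hg hgc]
    _ ≤ ‖∫ x in K, lap g x ^ 2‖ := Real.le_norm_self _
    _ ≤ N ^ 2 * volume.real K :=
        norm_setIntegral_le_of_norm_le_const hK.measure_lt_top fun x hx => by
          simpa using pow_le_pow_left₀ (abs_nonneg _) (hlap x hx) 2

lemma abs_sum_mul_le_amgm {ι : Type*} {s : Finset ι} {F D : ι → ℝ} {b N : ℝ} (hb : 0 ≤ b)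
    (hN : 0 < N) (hF : ∀ i ∈ s, D i ≠ 0 → |F i| ≤ b) :
    |∑ i ∈ s, F i * D i| ≤ b * (s.card * (N / 2) + (2 * N)⁻¹ * ∑ i ∈ s, D i ^ 2) := by
  have amgm (t : ℝ) : |t| ≤ N / 2 + (2 * N)⁻¹ * t ^ 2 := by
    have : N / 2 + (2 * N)⁻¹ * t ^ 2 - |t| = (2 * N)⁻¹ * (N - |t|) ^ 2 := by
      rw [← sq_abs t]
      field_simp
      ring
    linarith [show 0 ≤ (2 * N)⁻¹ * (N - |t|) ^ 2 by positivity]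
  calc |∑ i ∈ s, F i * D i| ≤ ∑ i ∈ s, |F i * D i| := Finset.abs_sum_le_sum_abs _ _
    _ ≤ ∑ i ∈ s, b * (N / 2 + (2 * N)⁻¹ * D i ^ 2) := by
        refine Finset.sum_le_sum fun i hi => ?_
        by_cases hD : D i = 0
        · rw [hD, mul_zero, abs_zero]
          positivity
        · rw [abs_mul]
          exact mul_le_mul (hF i hi hD) (amgm _) (abs_nonneg _) hb
    _ = _ := by
        rw [← Finset.mul_sum, Finset.sum_add_distrib, Finset.sum_const, ← Finset.mul_sum,
          nsmul_eq_mul]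

namespace StokesSystem

variable {ν a b N : ℝ} {U : Fin 3 → R3 → ℝ} {F : Fin 3 → Fin 3 → R3 → ℝ} {p g : R3 → ℝ}

lemma integral_pd_pressure_mul (h : StokesSystem ν U F p) (hg : Smooth g)
    (hgc : HasCompactSupport g) (i : Fin 3) :
    ∫ x, pd p i x * g x = ν * (∫ x, U i x * lap g x) + ∑ j, ∫ x, F i j x * pd g j x := by
  have hint {k : R3 → ℝ} (hk : Smooth k) : Integrable fun x => k x * g x :=
    integrable_mul_of_hasCompactSupport hk.continuous hg.continuous hgc
  have hF (j : Fin 3) : Smooth (pd (F i j) j) := (h.smooth_stress i j).pd j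
  simp only [h.momentum, sub_mul, Finset.sum_mul, mul_assoc]
  rw [integral_sub ((hint (h.smooth_velocity i).lap).const_mul ν)
      (integrable_finsetSum _ fun j _ => hint (hF j)),
    integral_const_mul, ← integral_mul_lap (h.smooth_velocity i) hg hgc,
    integral_finsetSum _ fun j _ => hint (hF j)]
  simp only [fun j => integral_mul_pd (h.smooth_stress i j) hg hgc j, Finset.sum_neg_distrib,
    sub_eq_add_neg]

lemma integral_pressure_mul_lap (h : StokesSystem ν U F p) (hg : Smooth g)
    (hgc : HasCompactSupport g) :
    ∫ x, p x * lap g x = -∑ i, ∑ j, ∫ x, F i j x * pd (pd g i) j x := by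
  have component (i : Fin 3) : ∫ x, p x * pd (pd g i) i x
      = -(ν * ∫ x, U i x * pd (lap g) i x) - ∑ j, ∫ x, F i j x * pd (pd g i) j x := by
    rw [integral_mul_pd h.smooth_pressure (hg.pd i) (hasCompactSupport_pd hgc i),
      h.integral_pd_pressure_mul (hg.pd i) (hasCompactSupport_pd hgc i)]
    simp only [lap_pd hg]
    ring
  simp only [lap, Finset.mul_sum]
  rw [integral_finsetSum _ fun i _ => integrable_mul_of_hasCompactSupport
    h.smooth_pressure.continuous ((hg.pd i).pd i).continuous
    (hasCompactSupport_pd (hasCompactSupport_pd hgc i) i)]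
  simp only [component, Finset.sum_sub_distrib, Finset.sum_neg_distrib, ← Finset.mul_sum,
    sum_integral_mul_pd h.smooth_velocity hg.lap (hasCompactSupport_lap hgc), h.div_velocity]
  simp

lemma integral_pressure_mul_lap_eq_neg_setIntegral (h : StokesSystem ν U F p) (hg : Smooth g)
    (hgc : HasCompactSupport g) {K : Set R3} (hgK : tsupport g ⊆ K) :
    ∫ x, p x * lap g x
      = -∫ x in K, ∑ q : Fin 3 × Fin 3, F q.1 q.2 x * pd (pd g q.1) q.2 x := by
  have hint (q : Fin 3 × Fin 3) : Integrable fun x => F q.1 q.2 x * pd (pd g q.1) q.2 x :=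
    integrable_mul_of_hasCompactSupport (h.smooth_stress q.1 q.2).continuous
      ((hg.pd q.1).pd q.2).continuous (hasCompactSupport_pd (hasCompactSupport_pd hgc q.1) q.2)
  rw [h.integral_pressure_mul_lap hg hgc, setIntegral_eq_integral_of_forall_compl_eq_zero
      fun x hx => by simp [pd_pd_eq_zero_of_notMem hgK hx],
    integral_finsetSum _ fun q _ => hint q, Fintype.sum_prod_type]

lemma abs_integral_pressure_mul_lap_le (h : StokesSystem ν U F p) {K : Set R3} (hK : IsCompact K)
    (hg : Smooth g) (hgK : tsupport g ⊆ K) (hN : 0 < N) (hlap : ∀ x ∈ K, |lap g x| ≤ N)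
    (hF : ∀ i j, ∀ x ∈ K, |F i j x| ≤ b) :
    |∫ x, p x * lap g x| ≤ 5 * b * N * volume.real K := by
  have hgc : HasCompactSupport g := hK.of_isClosed_subset (isClosed_tsupport g) hgK
  have weak := h.integral_pressure_mul_lap_eq_neg_setIntegral hg hgc hgK
  have hDc (i j : Fin 3) : Continuous (pd (pd g i) j) := ((hg.pd i).pd j).continuous
  have hHint : IntegrableOn (fun x => (2 * N)⁻¹ * ∑ q : Fin 3 × Fin 3, pd (pd g q.1) q.2 x ^ 2) K :=
    (by fun_prop : Continuous _).continuousOn.integrableOn_compact hK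
  have hconst : IntegrableOn (fun _ => (9 : ℝ) * (N / 2)) K :=
    continuousOn_const.integrableOn_compact hK
  rcases K.eq_empty_or_nonempty with rfl | ⟨x₀, hx₀⟩
  · simp [weak]
  have hb : 0 ≤ b := (abs_nonneg _).trans (hF 0 0 x₀ hx₀)
  rw [weak, abs_neg]
  calc |∫ x in K, ∑ q : Fin 3 × Fin 3, F q.1 q.2 x * pd (pd g q.1) q.2 x|
      ≤ ∫ x in K, b * (9 * (N / 2)
          + (2 * N)⁻¹ * ∑ q : Fin 3 × Fin 3, pd (pd g q.1) q.2 x ^ 2) := by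
        rw [← Real.norm_eq_abs]
        refine norm_integral_le_of_norm_le ((hconst.add hHint).const_mul b) ?_
        filter_upwards [ae_restrict_mem hK.measurableSet] with x hx
        have amgm := abs_sum_mul_le_amgm (s := .univ) (D := fun q : Fin 3 × Fin 3 =>
          pd (pd g q.1) q.2 x) hb hN fun q _ _ => hF q.1 q.2 x hx
        rwa [show (Finset.univ : Finset (Fin 3 × Fin 3)).card = 9 from rfl, Nat.cast_ofNat] at amgm
    _ = b * (9 * (N / 2) * volume.real K
          + (2 * N)⁻¹ * ∫ x in K, ∑ q : Fin 3 × Fin 3, pd (pd g q.1) q.2 x ^ 2) := by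
        rw [integral_const_mul, integral_add hconst hHint, integral_const_mul (2 * N)⁻¹,
          setIntegral_const, smul_eq_mul, mul_comm (volume.real K)]
    _ ≤ b * (9 * (N / 2) * volume.real K + (2 * N)⁻¹ * (N ^ 2 * volume.real K)) := by
        gcongr
        exact setIntegral_sum_hessian_sq_le hK hg hgK hlap
    _ = 5 * b * N * volume.real K := by
        field_simp
        ring

lemma pd_pressure_convolution (h : StokesSystem ν U F p) {η : R3 → ℝ} (hη : Smooth η)
    (hηc : HasCompactSupport η) (i : Fin 3) (y : R3) :
    pd (p ⋆ η) i y = ν * (∫ x, U i x * lap η (y - x)) - ∑ j, ∫ x, F i j x * pd η j (y - x) := by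
  have hw : Smooth fun t => η (y - t) := hη.comp (contDiff_const.sub contDiff_id)
  have hwc : HasCompactSupport fun t => η (y - t) := hηc.comp_homeomorph (Homeomorph.subLeft y)
  have test := h.integral_pd_pressure_mul hw hwc i
  have parts := integral_mul_pd h.smooth_pressure hw hwc i
  simp only [pd_comp_const_sub, lap_comp_const_sub, mul_neg, integral_neg, neg_inj,
    Finset.sum_neg_distrib] at test parts
  rw [pd_convolution h.smooth_pressure.continuous hη hηc]
  change ∫ t, p t * pd η i (y - t) = _
  rw [parts, test, sub_eq_add_neg]

lemma abs_pd_pressure_convolution_le (h : StokesSystem ν U F p) (hν : 0 ≤ ν) {η : R3 → ℝ} {δ : ℝ}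
    (hη : Smooth η) (hηδ : tsupport η ⊆ closedBall 0 δ) {y : R3} {i : Fin 3}
    (hU : ∀ x ∈ closedBall y δ, |U i x| ≤ a) (hF : ∀ j, ∀ x ∈ closedBall y δ, |F i j x| ≤ b) :
    |pd (p ⋆ η) i y| ≤ ν * a * (∫ z, |lap η z|) + b * ∑ j, ∫ z, |pd η j z| := by
  have hηc : HasCompactSupport η :=
    (isCompact_closedBall 0 δ).of_isClosed_subset (isClosed_tsupport η) hηδ
  have bound {k : R3 → ℝ} {c : ℝ} {f : R3 → ℝ} (hk : Continuous k)
      (hkη : tsupport k ⊆ tsupport η) (hf : ∀ x ∈ closedBall y δ, |f x| ≤ c) :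
      |∫ x, f x * k (y - x)| ≤ c * ∫ z, |k z| := by
    rw [← integral_sub_left_eq_self (fun z => |k z|) volume y]
    refine abs_integral_mul_le ?_ fun x hx => hf x ?_
    · exact ((hk.integrable_of_hasCompactSupport
        (hηc.of_isClosed_subset (isClosed_tsupport k) hkη)).comp_sub_left y)
    · have := hηδ (hkη (subset_tsupport k hx))
      rwa [mem_closedBall_zero_iff, ← dist_eq_norm, dist_comm] at this
  rw [h.pd_pressure_convolution hη hηc]
  calc |ν * (∫ x, U i x * lap η (y - x)) - ∑ j, ∫ x, F i j x * pd η j (y - x)|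
      ≤ |ν * ∫ x, U i x * lap η (y - x)| + |∑ j, ∫ x, F i j x * pd η j (y - x)| := abs_sub _ _
    _ ≤ ν * (a * ∫ z, |lap η z|) + ∑ j, b * ∫ z, |pd η j z| := by
        rw [abs_mul, abs_of_nonneg hν]
        gcongr
        · exact bound hη.lap.continuous (tsupport_lap_subset η) hU
        · exact (Finset.abs_sum_le_sum_abs _ _).trans <| Finset.sum_le_sum fun j _ =>
            bound (hη.pd j).continuous (tsupport_pd_subset η j) (hF j)
    _ = _ := by rw [Finset.mul_sum, mul_assoc]

end StokesSystem

lemma integral_abs_le_of_tsupport_subset {f : R3 → ℝ} {K : Set R3} {m : ℝ} (hK : IsCompact K)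
    (hfK : tsupport f ⊆ K) (hf : ∀ x, |f x| ≤ m) : ∫ x, |f x| ≤ m * volume.real K := by
  rw [← setIntegral_eq_integral_of_forall_compl_eq_zero fun x hx => by
    simpa using image_eq_zero_of_notMem_tsupport (mt (@hfK x) hx)]
  exact (Real.le_norm_self _).trans <|
    norm_setIntegral_le_of_norm_le_const hK.measure_lt_top fun x _ => by simpa using hf x

lemma integral_abs_mollifier_one_pos : 0 < ∫ z, |mollifier 1 z| := by
  calc (0 : ℝ) < |∫ z, mollifier 1 z| := by simp [integral_mollifier_one]
    _ ≤ ∫ z, |mollifier 1 z| := abs_integral_le_integral_abs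

lemma one_lt_rank_R3 : 1 < Module.rank ℝ R3 := by
  rw [← Module.finrank_eq_rank, finrank_euclideanSpace_fin]
  exact_mod_cast (by norm_num : 1 < 3)

namespace StokesSystem

variable {ν a b m δ : ℝ} {U : Fin 3 → R3 → ℝ} {F : Fin 3 → Fin 3 → R3 → ℝ} {p f : R3 → ℝ}

lemma abs_pressure_convolution_sub_le (h : StokesSystem ν U F p) (hν : 0 ≤ ν)
    (hU : ∀ i, ∀ x ∈ annulus (1 / 4) 3, |U i x| ≤ a)
    (hF : ∀ i j, ∀ x ∈ annulus (1 / 4) 3, |F i j x| ≤ b)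
    {η : R3 → ℝ} (hη : Smooth η) (hη4 : tsupport η ⊆ closedBall 0 (1 / 4)) {x y : R3}
    (hx : x ∈ annulus 1 2) (hy : y ∈ annulus 1 2) :
    |(p ⋆ η) x - (p ⋆ η) y|
      ≤ 24 * (ν * a * (∫ z, |lap η z|) + b * ∑ j, ∫ z, |pd η j z|) := by
  have hηc : HasCompactSupport η :=
    (isCompact_closedBall 0 _).of_isClosed_subset (isClosed_tsupport η) hη4
  have hsmooth : Smooth (p ⋆ η) := .convolution h.smooth_pressure.continuous hη hηc
  have hball {z w : R3} (hz : z ∈ annulus (1 / 2) 2) (hw : w ∈ closedBall z (1 / 4)) :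
      w ∈ annulus (1 / 4) 3 := by
    have hsum := annulus_add_closedBall_subset (1 / 4) (Set.add_mem_add hz
      (mem_closedBall_zero_iff.2 (mem_closedBall_iff_norm.1 hw)))
    rw [add_sub_cancel] at hsum
    exact annulus_subset_annulus (by norm_num) (by norm_num) hsum
  have hfderiv : ∀ z ∈ annulus (1 / 2) 2, ‖fderiv ℝ (p ⋆ η) z‖
      ≤ 3 * (ν * a * (∫ z, |lap η z|) + b * ∑ j, ∫ z, |pd η j z|) := fun z hz => by
    refine (norm_fderiv_le_sum_abs_pd _ z).trans <| (Finset.sum_le_card_nsmul _ _ _ fun i _ =>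
      h.abs_pd_pressure_convolution_le hν hη hη4 (fun x hx => hU i x (hball hz hx))
        fun j x hx => hF i j x (hball hz hx)).trans_eq ?_
    simp [mul_add]
  calc |(p ⋆ η) x - (p ⋆ η) y|
      ≤ 4 * 2 * (3 * (ν * a * (∫ z, |lap η z|) + b * ∑ j, ∫ z, |pd η j z|)) :=
        norm_sub_le_of_norm_fderiv_le_annulus one_lt_rank_R3 zero_le_one
          (hsmooth.differentiable (by simp)) hfderiv hx hy
    _ = _ := by ring

lemma abs_integral_pressure_mul_convolution_mollifier_le (h : StokesSystem ν U F p) (hν : 0 ≤ ν)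
    (hU : ∀ i, ∀ x ∈ annulus (1 / 4) 3, |U i x| ≤ a)
    (hF : ∀ i j, ∀ x ∈ annulus (1 / 4) 3, |F i j x| ≤ b)
    (hf : Continuous f) (hfK : tsupport f ⊆ annulus 1 2) (hf0 : ∫ x, f x = 0) :
    |∫ x, p x * (f ⋆ mollifier (1 / 4)) x|
      ≤ 24 * (ν * a * (∫ z, |lap (mollifier (1 / 4)) z|)
        + b * ∑ j, ∫ z, |pd (mollifier (1 / 4)) j z|) * ∫ x, |f x| := by
  have hη := smooth_mollifier (1 / 4)
  have hηc : HasCompactSupport (mollifier (1 / 4)) := hasCompactSupport_mollifier (by norm_num)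
  have hfc : HasCompactSupport f :=
    isCompact_annulus.of_isClosed_subset (isClosed_tsupport f) hfK
  have hp := h.smooth_pressure.continuous
  have he : EuclideanSpace.single (0 : Fin 3) (1 : ℝ) ∈ annulus 1 2 := by
    constructor <;> simp
  have recentre : ∫ x, p x * (f ⋆ mollifier (1 / 4)) x
      = ∫ x, ((p ⋆ mollifier (1 / 4)) x - (p ⋆ mollifier (1 / 4)) (.single 0 1)) * f x := by
    rw [integral_mul_convolution hp hf hη.continuous hfc hηc (mollifier_neg _)]
    simp only [sub_mul]
    rw [integral_sub (integrable_mul_of_hasCompactSupport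
        (Smooth.convolution hp hη hηc).continuous hf hfc)
      ((hf.integrable_of_hasCompactSupport hfc).const_mul _), integral_const_mul, hf0, mul_zero,
      sub_zero]
    simp only [mul_comm]
  rw [recentre]
  exact abs_integral_mul_le (hf.integrable_of_hasCompactSupport hfc) fun x hx =>
    h.abs_pressure_convolution_sub_le hν hU hF hη (tsupport_mollifier_subset (by norm_num))
      (hfK (subset_tsupport f hx)) he

lemma abs_integral_pressure_mul_convolution_mollifier_sub_le (h : StokesSystem ν U F p)
    (hF : ∀ i j, ∀ x ∈ annulus (1 / 4) 3, |F i j x| ≤ b)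
    (hf : Continuous f) (hfK : tsupport f ⊆ annulus 1 2) (hm : 0 < m) (hfm : ∀ x, |f x| ≤ m)
    (hδ : 0 < δ) (hδ4 : δ ≤ 1 / 4) :
    |∫ x, p x * ((f ⋆ mollifier (1 / 4)) x - (f ⋆ mollifier δ) x)|
      ≤ 5 * b * (2 * m * ∫ z, |mollifier 1 z|) * volume.real (annulus (1 / 4) 3 : Set R3) := by
  have hG : Smooth fun z => newtonReg (1 / 4) z - newtonReg δ z :=
    (smooth_newtonReg _).sub (smooth_newtonReg δ)
  have hGK := tsupport_newtonReg_sub_subset hδ hδ4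
  have hGc : HasCompactSupport fun z => newtonReg (1 / 4) z - newtonReg δ z :=
    (isCompact_closedBall 0 _).of_isClosed_subset (isClosed_tsupport _) hGK
  have hmollifier {s : ℝ} (hs : 0 < s) (x : R3) :
      |(f ⋆ mollifier s) x| ≤ m * ∫ z, |mollifier 1 z| := by
    rw [← integral_abs_mollifier hs]
    exact abs_convolution_le hfm (smooth_mollifier s).continuous (hasCompactSupport_mollifier hs) x
  simp only [convolution_mollifier_sub hf hδ hδ4]
  refine h.abs_integral_pressure_mul_lap_le isCompact_annulus (.convolution hf hG hGc)
    ((tsupport_convolution_subset_annulus hfK hGK).trans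
      (annulus_subset_annulus (by norm_num) (by norm_num)))
    (by have := integral_abs_mollifier_one_pos; positivity) (fun x _ => ?_) hF
  rw [← convolution_mollifier_sub hf hδ hδ4]
  linarith [abs_sub ((f ⋆ mollifier (1 / 4)) x) ((f ⋆ mollifier δ) x),
    hmollifier (by norm_num : (0 : ℝ) < 1 / 4) x, hmollifier hδ x]

/- The pressure is only controlled modulo constants, hence the mean-zero condition. We write
`f = f ⋆ η - Δ(f ⋆ Γ)` with a compactly supported truncation `Γ` of the Newtonian potential: the
first term sees `∇p` mollified, the second one is an `L²` estimate for the Hessian of `f ⋆ Γ`. -/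
lemma abs_integral_pressure_mul_le (h : StokesSystem ν U F p) (hν : 0 ≤ ν)
    (hU : ∀ i, ∀ x ∈ annulus (1 / 4) 3, |U i x| ≤ a)
    (hF : ∀ i j, ∀ x ∈ annulus (1 / 4) 3, |F i j x| ≤ b)
    (hf : Continuous f) (hfK : tsupport f ⊆ annulus 1 2) (hf0 : ∫ x, f x = 0) (hm : 0 < m)
    (hfm : ∀ x, |f x| ≤ m) :
    |∫ x, p x * f x| ≤ 24 * (ν * a * (∫ z, |lap (mollifier (1 / 4)) z|)
        + b * ∑ j, ∫ z, |pd (mollifier (1 / 4)) j z|) * (∫ x, |f x|)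
      + 5 * b * (2 * m * ∫ z, |mollifier 1 z|) * volume.real (annulus (1 / 4) 3 : Set R3) := by
  have hfc : HasCompactSupport f :=
    isCompact_annulus.of_isClosed_subset (isClosed_tsupport f) hfK
  have hp := h.smooth_pressure.continuous
  have hint {s : ℝ} (hs : 0 < s) : Integrable fun x => p x * (f ⋆ mollifier s) x :=
    integrable_mul_of_hasCompactSupport hp
      (Smooth.convolution hf (smooth_mollifier s) (hasCompactSupport_mollifier hs)).continuous
      (hfc.convolution _ (hasCompactSupport_mollifier hs))
  refine le_of_tendsto (tendsto_integral_mul_convolution_mollifier hp hf hfc).abs ?_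
  filter_upwards [Ioc_mem_nhdsGT (by norm_num : (0 : ℝ) < 1 / 4)] with δ hδ
  have coarse := h.abs_integral_pressure_mul_convolution_mollifier_le hν hU hF hf hfK hf0
  have fine := h.abs_integral_pressure_mul_convolution_mollifier_sub_le hF hf hfK hm hfm hδ.1 hδ.2
  simp only [mul_sub] at fine
  rw [integral_sub (hint (by norm_num)) (hint hδ.1), abs_sub_comm] at fine
  exact (sub_le_iff_le_add'.1 (abs_sub_abs_le_abs_sub _ _)).trans (add_le_add coarse fine)

end StokesSystem

theorem exists_abs_integral_pressure_mul_le : ∃ C : ℝ, 0 ≤ C ∧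
    ∀ {ν a b m : ℝ} {U : Fin 3 → R3 → ℝ} {F : Fin 3 → Fin 3 → R3 → ℝ} {p f : R3 → ℝ},
      StokesSystem ν U F p → 0 ≤ ν → 0 ≤ a → 0 ≤ b → 0 < m →
      (∀ i, ∀ x ∈ annulus (1 / 4) 3, |U i x| ≤ a) →
      (∀ i j, ∀ x ∈ annulus (1 / 4) 3, |F i j x| ≤ b) →
      Continuous f → tsupport f ⊆ annulus 1 2 → ∫ x, f x = 0 → (∀ x, |f x| ≤ m) →
      |∫ x, p x * f x| ≤ C * m * (ν * a + b) := by
  set A := ∫ z, |lap (mollifier (1 / 4)) z|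
  set B := ∑ j, ∫ z, |pd (mollifier (1 / 4)) j z|
  set M := ∫ z, |mollifier 1 z|
  set V := volume.real (annulus (1 / 4) 3 : Set R3)
  have hA : 0 ≤ A := integral_nonneg fun z => abs_nonneg _
  have hB : 0 ≤ B := Finset.sum_nonneg fun j _ => integral_nonneg fun z => abs_nonneg _
  have hM : 0 < M := integral_abs_mollifier_one_pos
  have : 0 ≤ V := measureReal_nonneg
  refine ⟨(24 * (A + B) + 10 * M) * V, by positivity, ?_⟩
  intro ν a b m U F p f h hν ha hb hm hU hF hf hfK hf0 hfm
  have hfV : ∫ x, |f x| ≤ m * V := integral_abs_le_of_tsupport_subset isCompact_annulus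
    (hfK.trans (annulus_subset_annulus (by norm_num) (by norm_num))) hfm
  calc |∫ x, p x * f x|
      ≤ 24 * (ν * a * A + b * B) * (∫ x, |f x|) + 5 * b * (2 * m * M) * V :=
        h.abs_integral_pressure_mul_le hν hU hF hf hfK hf0 hm hfm
    _ ≤ 24 * (ν * a * (A + B) + b * (A + B)) * (m * V) + 5 * b * (2 * m * M) * V := by
        gcongr
        · exact le_add_of_nonneg_right hB
        · exact le_add_of_nonneg_left hA
    _ = 24 * (A + B) * (ν * a + b) * (m * V) + 10 * M * m * V * (0 + b) := by ring
    _ ≤ 24 * (A + B) * (ν * a + b) * (m * V) + 10 * M * m * V * (ν * a + b) := by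
        gcongr
        positivity
    _ = (24 * (A + B) + 10 * M) * V * m * (ν * a + b) := by ring

/-! ### The local energy estimate -/

/-- A smooth solution of the stationary tropical climate model with viscosity `ν`, in coordinates:
`U` and `V` are the barotropic and baroclinic velocities, `Θ` the temperature and `p` the pressure.
The viscosity is a parameter because rescaling a solution changes it. -/
structure ViscousTCM (ν : ℝ) (U V : Fin 3 → R3 → ℝ) (Θ p : R3 → ℝ) : Prop where
  smooth_barotropic : ∀ i, Smooth (U i)
  smooth_baroclinic : ∀ i, Smooth (V i)
  smooth_temperature : Smooth Θ
  smooth_pressure : Smooth p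
  barotropic : ∀ i x, ν * lap (U i) x = ∑ j, U j x * pd (U i) j x + pd p i x
    + ∑ j, pd (fun y => V j y * V i y) j x
  baroclinic : ∀ i x, ν * lap (V i) x = ∑ j, U j x * pd (V i) j x + pd Θ i x
    + ∑ j, V j x * pd (U i) j x
  temperature : ∀ x, ν * lap Θ x = ∑ j, U j x * pd Θ j x + ∑ j, pd (V j) j x
  div_barotropic : ∀ x, ∑ j, pd (U j) j x = 0

section Energy

variable (U V : Fin 3 → R3 → ℝ) (Θ : R3 → ℝ)

/-- Twice the energy density, `|U|² + |V|² + Θ²`. -/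
def energy (x : R3) : ℝ := ∑ i, U i x ^ 2 + ∑ i, V i x ^ 2 + Θ x ^ 2

/-- The dissipation density `|∇U|² + |∇V|² + |∇Θ|²`. -/
def dissipation (x : R3) : ℝ := ∑ i, gradSq (U i) x + ∑ i, gradSq (V i) x + gradSq Θ x

/-- The part `(|U|² + |V|² + Θ²) U / 2 + (U · V) V + Θ V` of the energy flux which does not
involve the pressure. -/
def energyFlux (j : Fin 3) (x : R3) : ℝ :=
  1 / 2 * (energy U V Θ x * U j x) + (∑ i, U i x * V i x) * V j x + Θ x * V j x

lemma dissipation_nonneg (x : R3) : 0 ≤ dissipation U V Θ x :=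
  add_nonneg (add_nonneg (Finset.sum_nonneg fun i _ => gradSq_nonneg (U i) x)
    (Finset.sum_nonneg fun i _ => gradSq_nonneg (V i) x)) (gradSq_nonneg Θ x)

end Energy

namespace ViscousTCM

variable {ν : ℝ} {U V : Fin 3 → R3 → ℝ} {Θ p : R3 → ℝ}

lemma smooth_energy (h : ViscousTCM ν U V Θ p) : Smooth (energy U V Θ) :=
  ((ContDiff.sum fun i _ => (h.smooth_barotropic i).pow 2).add
    (ContDiff.sum fun i _ => (h.smooth_baroclinic i).pow 2)).add (h.smooth_temperature.pow 2)

lemma smooth_energyFlux (h : ViscousTCM ν U V Θ p) (j : Fin 3) : Smooth (energyFlux U V Θ j) :=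
  ((contDiff_const.mul (h.smooth_energy.mul (h.smooth_barotropic j))).add
    ((ContDiff.sum fun i _ => (h.smooth_barotropic i).mul (h.smooth_baroclinic i)).mul
      (h.smooth_baroclinic j))).add (h.smooth_temperature.mul (h.smooth_baroclinic j))

lemma continuous_dissipation (h : ViscousTCM ν U V Θ p) : Continuous (dissipation U V Θ) :=
  ((continuous_finsetSum _ fun i _ => (h.smooth_barotropic i).continuous_gradSq).add
    (continuous_finsetSum _ fun i _ => (h.smooth_baroclinic i).continuous_gradSq)).add
    h.smooth_temperature.continuous_gradSq

lemma pd_energy (h : ViscousTCM ν U V Θ p) (j : Fin 3) (x : R3) :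
    pd (energy U V Θ) j x
      = 2 * (∑ i, U i x * pd (U i) j x + ∑ i, V i x * pd (V i) j x + Θ x * pd Θ j x) := by
  have hU (i : Fin 3) := (h.smooth_barotropic i).differentiableAt x
  have hV (i : Fin 3) := (h.smooth_baroclinic i).differentiableAt x
  have hΘ := h.smooth_temperature.differentiableAt x
  change pd (fun y => ∑ i, U i y ^ 2 + ∑ i, V i y ^ 2 + Θ y ^ 2) j x = _
  rw [pd_add (by fun_prop) (by fun_prop), pd_add (by fun_prop) (by fun_prop),
    pd_sum fun i _ => (hU i).fun_pow 2, pd_sum fun i _ => (hV i).fun_pow 2, pd_sq hΘ]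
  simp only [pd_sq (hU _), pd_sq (hV _), ← Finset.mul_sum, mul_add]

lemma lap_energy (h : ViscousTCM ν U V Θ p) (x : R3) :
    lap (energy U V Θ) x = 2 * dissipation U V Θ x
      + 2 * (∑ i, U i x * lap (U i) x + ∑ i, V i x * lap (V i) x + Θ x * lap Θ x) := by
  have hU (i : Fin 3) : Smooth fun y => U i y ^ 2 := (h.smooth_barotropic i).pow 2
  have hV (i : Fin 3) : Smooth fun y => V i y ^ 2 := (h.smooth_baroclinic i).pow 2
  have hΘ : Smooth fun y => Θ y ^ 2 := h.smooth_temperature.pow 2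
  change lap (fun y => ∑ i, U i y ^ 2 + ∑ i, V i y ^ 2 + Θ y ^ 2) x = _
  rw [lap_add ((ContDiff.sum fun i _ => hU i).add (ContDiff.sum fun i _ => hV i)) hΘ,
    lap_add (ContDiff.sum fun i _ => hU i) (ContDiff.sum fun i _ => hV i),
    lap_sum fun i _ => hU i, lap_sum fun i _ => hV i, lap_sq h.smooth_temperature]
  simp only [lap_sq (h.smooth_barotropic _), lap_sq (h.smooth_baroclinic _),
    Finset.sum_add_distrib, ← Finset.mul_sum, mul_assoc, dissipation]
  ring

lemma pd_energyFlux (h : ViscousTCM ν U V Θ p) (j : Fin 3) (x : R3) :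
    pd (energyFlux U V Θ j) j x
      = 1 / 2 * (pd (energy U V Θ) j x * U j x + energy U V Θ x * pd (U j) j x)
        + ((∑ i, (pd (U i) j x * V i x + U i x * pd (V i) j x)) * V j x
          + (∑ i, U i x * V i x) * pd (V j) j x)
        + (pd Θ j x * V j x + Θ x * pd (V j) j x) := by
  have hU (i : Fin 3) := (h.smooth_barotropic i).differentiableAt x
  have hV (i : Fin 3) := (h.smooth_baroclinic i).differentiableAt x
  have hΘ := h.smooth_temperature.differentiableAt x
  have hE := h.smooth_energy.differentiableAt x
  change pd (fun y => 1 / 2 * (energy U V Θ y * U j y) + (∑ i, U i y * V i y) * V j y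
    + Θ y * V j y) j x = _
  rw [pd_add (by fun_prop) (by fun_prop), pd_add (by fun_prop) (by fun_prop),
    pd_const_mul (by fun_prop), pd_mul hE (hU j), pd_mul (by fun_prop) (hV j), pd_mul hΘ (hV j),
    pd_sum fun i _ => (hU i).fun_mul (hV i)]
  simp only [pd_mul (hU _) (hV _)]

lemma mul_dissipation_eq (h : ViscousTCM ν U V Θ p) (x : R3) :
    ν * dissipation U V Θ x = ν / 2 * lap (energy U V Θ) x
      - ∑ j, pd (fun y => energyFlux U V Θ j y + p y * U j y) j x := by
  have hU (i : Fin 3) := (h.smooth_barotropic i).differentiableAt x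
  have hV (i : Fin 3) := (h.smooth_baroclinic i).differentiableAt x
  have hp := h.smooth_pressure.differentiableAt x
  have barotropic := fun i => h.barotropic i x
  have baroclinic := fun i => h.baroclinic i x
  have temperature := h.temperature x
  have div_barotropic := h.div_barotropic x
  simp only [pd_add ((h.smooth_energyFlux _).differentiableAt x) (hp.fun_mul (hU _)),
    pd_mul hp (hU _), h.pd_energyFlux, h.pd_energy, h.lap_energy]
  simp only [pd_mul (hV _) (hV _)] at barotropic
  simp only [Fin.sum_univ_three] at *
  linear_combination -(U 0 x * barotropic 0 + U 1 x * barotropic 1 + U 2 x * barotropic 2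
    + V 0 x * baroclinic 0 + V 1 x * baroclinic 1 + V 2 x * baroclinic 2 + Θ x * temperature)
    + (1 / 2 * energy U V Θ x + p x) * div_barotropic

lemma integral_dissipation_mul (h : ViscousTCM ν U V Θ p) {φ : R3 → ℝ} (hφ : Smooth φ)
    (hφc : HasCompactSupport φ) :
    ν * ∫ x, dissipation U V Θ x * φ x = ν / 2 * (∫ x, energy U V Θ x * lap φ x)
      + (∑ j, ∫ x, energyFlux U V Θ j x * pd φ j x) + ∫ x, p x * ∑ j, U j x * pd φ j x := by
  have hflux (j : Fin 3) : Smooth (energyFlux U V Θ j) := h.smooth_energyFlux j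
  have hpU (j : Fin 3) : Smooth fun x => p x * U j x :=
    h.smooth_pressure.mul (h.smooth_barotropic j)
  have hK (j : Fin 3) : Smooth fun x => energyFlux U V Θ j x + p x * U j x :=
    (hflux j).add (hpU j)
  have hint {f : R3 → ℝ} (hf : Smooth f) (j : Fin 3) : Integrable fun x => f x * pd φ j x :=
    integrable_mul_of_hasCompactSupport hf.continuous (hφ.pd j).continuous
      (hasCompactSupport_pd hφc j)
  have split : ∑ j, ∫ x, (energyFlux U V Θ j x + p x * U j x) * pd φ j x
      = (∑ j, ∫ x, energyFlux U V Θ j x * pd φ j x) + ∫ x, p x * ∑ j, U j x * pd φ j x := by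
    simp only [add_mul, Finset.mul_sum, ← mul_assoc]
    rw [integral_finsetSum _ fun j _ => hint (hpU j) j, ← Finset.sum_add_distrib]
    exact Finset.sum_congr rfl fun j _ => integral_add (hint (hflux j) j) (hint (hpU j) j)
  have parts := sum_integral_mul_pd hK hφ hφc
  rw [add_assoc, ← split, parts, integral_mul_lap h.smooth_energy hφ hφc, ← integral_const_mul,
    ← integral_const_mul, ← sub_eq_add_neg, ← integral_sub]
  · simp only [← mul_assoc, h.mul_dissipation_eq, sub_mul]
  · exact (integrable_mul_of_hasCompactSupport h.smooth_energy.lap.continuous hφ.continuous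
      hφc).const_mul _
  · exact integrable_mul_of_hasCompactSupport (continuous_finsetSum _ fun j _ =>
      ((hK j).pd j).continuous) hφ.continuous hφc

lemma stokesSystem (h : ViscousTCM ν U V Θ p) :
    StokesSystem ν U (fun i j x => U j x * U i x + V j x * V i x) p where
  smooth_velocity := h.smooth_barotropic
  smooth_stress i j := ((h.smooth_barotropic j).mul (h.smooth_barotropic i)).add
    ((h.smooth_baroclinic j).mul (h.smooth_baroclinic i))
  smooth_pressure := h.smooth_pressure
  momentum i x := by
    have hU (i : Fin 3) := (h.smooth_barotropic i).differentiableAt x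
    have hV (i : Fin 3) := (h.smooth_baroclinic i).differentiableAt x
    have transport : ∑ j, pd (fun y => U j y * U i y) j x = ∑ j, U j x * pd (U i) j x := by
      simp only [pd_mul (hU _) (hU i), Finset.sum_add_distrib, ← Finset.sum_mul, h.div_barotropic,
        zero_mul, zero_add]
    simp only [pd_add ((hU _).fun_mul (hU i)) ((hV _).fun_mul (hV i)), Finset.sum_add_distrib,
      transport, h.barotropic]
    ring
  div_velocity := h.div_barotropic

end ViscousTCM

/-- A smooth cutoff function equal to `1` on the unit ball and supported in the ball of radius
`2`. -/
def cutoff : R3 → ℝ := (⟨1, 2, one_pos, one_lt_two⟩ : ContDiffBump (0 : R3))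

lemma smooth_cutoff : Smooth cutoff := ContDiffBump.contDiff _

lemma hasCompactSupport_cutoff : HasCompactSupport cutoff := ContDiffBump.hasCompactSupport _

lemma cutoff_nonneg (x : R3) : 0 ≤ cutoff x := ContDiffBump.nonneg _

lemma cutoff_eq_one {x : R3} (hx : x ∈ closedBall 0 1) : cutoff x = 1 :=
  ContDiffBump.one_of_mem_closedBall _ hx

lemma tsupport_pd_cutoff_subset (j : Fin 3) : tsupport (pd cutoff j) ⊆ annulus 1 2 := by
  refine closure_minimal (fun x hx => ?_) isClosed_annulus
  constructor
  · by_contra! hx1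
    have hlocal : cutoff =ᶠ[𝓝 x] fun _ => 1 :=
      (ContDiffBump.eventuallyEq_one_of_mem_ball _ (mem_ball_zero_iff.2 hx1))
    exact hx (by simp [pd, hlocal.fderiv_eq])
  · have hx2 : x ∈ tsupport cutoff := tsupport_pd_subset cutoff j (subset_tsupport _ hx)
    rw [cutoff, ContDiffBump.tsupport_eq] at hx2
    exact mem_closedBall_zero_iff.1 hx2

lemma mem_annulus_of_lap_cutoff_ne_zero {x : R3} (hx : lap cutoff x ≠ 0) : x ∈ annulus 1 2 :=
  (exists_mem_tsupport_pd_of_lap_ne_zero hx).elim fun j hj => tsupport_pd_cutoff_subset j hj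

lemma exists_abs_pd_cutoff_le : ∃ B : ℝ, 0 < B ∧ ∀ j x, |pd cutoff j x| ≤ B := by
  have bound (j : Fin 3) : ∃ C, ∀ x, ‖pd cutoff j x‖ ≤ C :=
    (hasCompactSupport_pd hasCompactSupport_cutoff j).exists_bound_of_continuous
      (smooth_cutoff.pd j).continuous
  choose C hC using bound
  have hC0 (j : Fin 3) : 0 ≤ C j := (norm_nonneg _).trans (hC j 0)
  refine ⟨∑ j, C j + 1, add_pos_of_nonneg_of_pos (Finset.sum_nonneg fun j _ => hC0 j) one_pos,
    fun j x => (hC j x).trans ?_⟩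
  linarith [Finset.single_le_sum (fun i _ => hC0 i) (Finset.mem_univ j)]

section PointwiseBounds

variable {U V : Fin 3 → R3 → ℝ} {Θ : R3 → ℝ} {x : R3} {a c d : ℝ}

lemma abs_energy_le (hac : a ≤ c) (hU : ∀ i, |U i x| ≤ a) (hV : ∀ i, |V i x| ≤ c)
    (hΘ : |Θ x| ≤ c) : |energy U V Θ x| ≤ 7 * c ^ 2 := by
  have sq_le {t : ℝ} (ht : |t| ≤ c) : t ^ 2 ≤ c ^ 2 := sq_le_sq' (abs_le.1 ht).1 (abs_le.1 ht).2
  have hnonneg : 0 ≤ energy U V Θ x := by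
    unfold energy
    positivity
  rw [abs_of_nonneg hnonneg, energy]
  simp only [Fin.sum_univ_three]
  linarith [sq_le ((hU 0).trans hac), sq_le ((hU 1).trans hac), sq_le ((hU 2).trans hac),
    sq_le (hV 0), sq_le (hV 1), sq_le (hV 2), sq_le hΘ]

lemma abs_energyFlux_le (hac : a ≤ c) (hU : ∀ i, |U i x| ≤ a) (hV : ∀ i, |V i x| ≤ c)
    (hΘ : |Θ x| ≤ c) (hVΘ : ∀ i, |V i x * Θ x| ≤ d) (j : Fin 3) :
    |energyFlux U V Θ j x| ≤ 7 * (a * c ^ 2 + d) := by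
  have ha : 0 ≤ a := (abs_nonneg _).trans (hU 0)
  have hd : 0 ≤ d := (abs_nonneg _).trans (hVΘ 0)
  have hE := abs_energy_le hac hU hV hΘ
  have hUV : |∑ i, U i x * V i x| ≤ 3 * (a * c) := by
    refine (Finset.abs_sum_le_sum_abs _ _).trans <|
      (Finset.sum_le_card_nsmul _ _ (a * c) fun i _ => ?_).trans_eq (by simp)
    rw [abs_mul]
    exact mul_le_mul (hU i) (hV i) (abs_nonneg _) ha
  calc |energyFlux U V Θ j x|
      ≤ 1 / 2 * (|energy U V Θ x| * |U j x|) + |∑ i, U i x * V i x| * |V j x|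
          + |V j x * Θ x| := by
        rw [mul_comm (V j x), energyFlux]
        refine (abs_add_three _ _ _).trans_eq ?_
        simp only [abs_mul, abs_of_pos (one_half_pos (α := ℝ))]
    _ ≤ 1 / 2 * (7 * c ^ 2 * a) + 3 * (a * c) * c + d := by
        have hc : 0 ≤ c := ha.trans hac
        gcongr
        exacts [hU j, hV j, hVΘ j]
    _ ≤ 7 * (a * c ^ 2 + d) := by nlinarith [mul_nonneg ha (sq_nonneg c)]

end PointwiseBounds

namespace ViscousTCM

variable {ν : ℝ} {U V : Fin 3 → R3 → ℝ} {Θ p : R3 → ℝ}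

lemma setIntegral_dissipation_le (h : ViscousTCM ν U V Θ p) :
    ∫ x in closedBall 0 1, dissipation U V Θ x ≤ ∫ x, dissipation U V Θ x * cutoff x := by
  have hint : Integrable fun x => dissipation U V Θ x * cutoff x :=
    integrable_mul_of_hasCompactSupport h.continuous_dissipation smooth_cutoff.continuous
      hasCompactSupport_cutoff
  calc ∫ x in closedBall 0 1, dissipation U V Θ x
      = ∫ x in closedBall 0 1, dissipation U V Θ x * cutoff x :=
        setIntegral_congr_fun measurableSet_closedBall fun x hx => by simp [cutoff_eq_one hx]
    _ ≤ ∫ x, dissipation U V Θ x * cutoff x := setIntegral_le_integral hint <| .of_forall fun x =>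
        mul_nonneg (dissipation_nonneg U V Θ x) (cutoff_nonneg x)

lemma integral_sum_barotropic_mul_pd_eq_zero (h : ViscousTCM ν U V Θ p) {g : R3 → ℝ}
    (hg : Smooth g) (hgc : HasCompactSupport g) : ∫ x, ∑ j, U j x * pd g j x = 0 := by
  rw [integral_finsetSum _ fun j _ => integrable_mul_of_hasCompactSupport
    (h.smooth_barotropic j).continuous (hg.pd j).continuous (hasCompactSupport_pd hgc j),
    sum_integral_mul_pd h.smooth_barotropic hg hgc]
  simp [h.div_barotropic]

end ViscousTCM

lemma tsupport_sum_mul_pd_cutoff_subset (U : Fin 3 → R3 → ℝ) :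
    tsupport (fun x => ∑ j, U j x * pd cutoff j x) ⊆ annulus 1 2 := by
  refine closure_minimal (fun x hx => ?_) isClosed_annulus
  obtain ⟨j, -, hj⟩ := Finset.exists_ne_zero_of_sum_ne_zero hx
  exact tsupport_pd_cutoff_subset j (subset_tsupport _ (right_ne_zero_of_mul hj))

lemma abs_sum_mul_pd_cutoff_le {U : Fin 3 → R3 → ℝ} {a B : ℝ} (ha : 0 ≤ a)
    (hU : ∀ i, ∀ x ∈ annulus 1 2, |U i x| ≤ a) (hB : ∀ j x, |pd cutoff j x| ≤ B) (x : R3) :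
    |∑ j, U j x * pd cutoff j x| ≤ 3 * a * B := by
  refine (Finset.abs_sum_le_sum_abs _ _).trans <|
    (Finset.sum_le_card_nsmul _ _ (a * B) fun j _ => ?_).trans_eq (by simp [mul_assoc])
  by_cases hj : pd cutoff j x = 0
  · rw [hj, mul_zero, abs_zero]
    exact mul_nonneg ha ((abs_nonneg _).trans (hB j x))
  · rw [abs_mul]
    exact mul_le_mul (hU j x (tsupport_pd_cutoff_subset j (subset_tsupport _ hj))) (hB j x)
      (abs_nonneg _) ha

/-- The bounds `|U| ≤ a`, `|V| ≤ c`, `|Θ| ≤ c` and `|V Θ| ≤ d`, componentwise, on the annulus which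
enters the local energy estimate. -/
structure AnnulusBounds (U V : Fin 3 → R3 → ℝ) (Θ : R3 → ℝ) (a c d : ℝ) : Prop where
  barotropic : ∀ i, ∀ x ∈ annulus (1 / 4) 3, |U i x| ≤ a
  baroclinic : ∀ i, ∀ x ∈ annulus (1 / 4) 3, |V i x| ≤ c
  temperature : ∀ x ∈ annulus (1 / 4) 3, |Θ x| ≤ c
  baroclinic_mul_temperature : ∀ i, ∀ x ∈ annulus (1 / 4) 3, |V i x * Θ x| ≤ d

lemma AnnulusBounds.integral_energy_add_flux_le {ν a c d : ℝ} {U V : Fin 3 → R3 → ℝ} {Θ : R3 → ℝ}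
    (hb : AnnulusBounds U V Θ a c d) (hν : 0 ≤ ν) (hac : a ≤ c) :
    ν / 2 * (∫ x, energy U V Θ x * lap cutoff x)
        + ∑ j, ∫ x, energyFlux U V Θ j x * pd cutoff j x
      ≤ 7 / 2 * (∫ x, |lap cutoff x|) * (ν * c ^ 2)
        + 7 * (∑ j, ∫ x, |pd cutoff j x|) * (a * c ^ 2 + d) := by
  have hmono : (annulus 1 2 : Set R3) ⊆ annulus (1 / 4) 3 :=
    annulus_subset_annulus (by norm_num) (by norm_num)
  have hE : |∫ x, energy U V Θ x * lap cutoff x| ≤ 7 * c ^ 2 * ∫ x, |lap cutoff x| :=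
    abs_integral_mul_le (smooth_cutoff.lap.continuous.integrable_of_hasCompactSupport
      (hasCompactSupport_lap hasCompactSupport_cutoff)) fun x hx =>
      have hx := hmono (mem_annulus_of_lap_cutoff_ne_zero hx)
      abs_energy_le hac (hb.barotropic · x hx) (hb.baroclinic · x hx) (hb.temperature x hx)
  have hflux (j : Fin 3) : |∫ x, energyFlux U V Θ j x * pd cutoff j x|
      ≤ 7 * (a * c ^ 2 + d) * ∫ x, |pd cutoff j x| :=
    abs_integral_mul_le ((smooth_cutoff.pd j).continuous.integrable_of_hasCompactSupport
      (hasCompactSupport_pd hasCompactSupport_cutoff j)) fun x hx =>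
      have hx := hmono (tsupport_pd_cutoff_subset j (subset_tsupport _ hx))
      abs_energyFlux_le hac (hb.barotropic · x hx) (hb.baroclinic · x hx) (hb.temperature x hx)
        (hb.baroclinic_mul_temperature · x hx) j
  calc ν / 2 * (∫ x, energy U V Θ x * lap cutoff x)
        + ∑ j, ∫ x, energyFlux U V Θ j x * pd cutoff j x
      ≤ ν / 2 * (7 * c ^ 2 * ∫ x, |lap cutoff x|)
        + ∑ j, 7 * (a * c ^ 2 + d) * ∫ x, |pd cutoff j x| := by
        gcongr with j
        · exact (le_abs_self _).trans hE
        · exact (le_abs_self _).trans (hflux j)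
    _ = _ := by
        rw [← Finset.mul_sum]
        ring

lemma AnnulusBounds.abs_stress_le {a c d : ℝ} {U V : Fin 3 → R3 → ℝ} {Θ : R3 → ℝ}
    (hb : AnnulusBounds U V Θ a c d) (hac : a ≤ c) (i j : Fin 3) :
    ∀ x ∈ annulus (1 / 4) 3, |U j x * U i x + V j x * V i x| ≤ 2 * c ^ 2 := by
  intro x hx
  have mul_le {s t : ℝ} (hs : |s| ≤ c) (ht : |t| ≤ c) : |s * t| ≤ c * c := by
    rw [abs_mul]
    exact mul_le_mul hs ht (abs_nonneg t) ((abs_nonneg s).trans hs)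
  linarith [abs_add_le (U j x * U i x) (V j x * V i x),
    mul_le ((hb.barotropic j x hx).trans hac) ((hb.barotropic i x hx).trans hac),
    mul_le (hb.baroclinic j x hx) (hb.baroclinic i x hx)]

theorem exists_abs_integral_pressure_flux_le : ∃ C : ℝ, 0 ≤ C ∧ ∀ {ν a c d : ℝ}
    {U V : Fin 3 → R3 → ℝ} {Θ p : R3 → ℝ}, ViscousTCM ν U V Θ p → 0 ≤ ν → 0 < a → a ≤ c →
      AnnulusBounds U V Θ a c d →
      |∫ x, p x * ∑ j, U j x * pd cutoff j x| ≤ C * (ν * c ^ 2 + a * c ^ 2) := by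
  obtain ⟨B, hB0, hB⟩ := exists_abs_pd_cutoff_le
  obtain ⟨C, hC0, hC⟩ := exists_abs_integral_pressure_mul_le
  refine ⟨6 * B * C, by positivity, ?_⟩
  intro ν a c d U V Θ p h hν ha hac hb
  calc |∫ x, p x * ∑ j, U j x * pd cutoff j x|
      ≤ C * (3 * a * B) * (ν * a + 2 * c ^ 2) :=
        hC h.stokesSystem hν ha.le (by positivity) (by positivity) hb.barotropic
          (hb.abs_stress_le hac) (continuous_finsetSum _ fun j _ =>
            (h.smooth_barotropic j).continuous.mul (smooth_cutoff.pd j).continuous)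
          (tsupport_sum_mul_pd_cutoff_subset U)
          (h.integral_sum_barotropic_mul_pd_eq_zero smooth_cutoff hasCompactSupport_cutoff)
          (abs_sum_mul_pd_cutoff_le ha.le (fun i x hx => hb.barotropic i x
            (annulus_subset_annulus (by norm_num) (by norm_num) hx)) hB)
    _ = 6 * B * C * (ν * (a * a) / 2 + a * c ^ 2) := by ring
    _ ≤ 6 * B * C * (ν * c ^ 2 + a * c ^ 2) := by
        have hνa : ν * (a * a) ≤ ν * c ^ 2 := by
          have hc : 0 ≤ c := ha.le.trans hac
          rw [sq]
          gcongr
        have := mul_nonneg hν (sq_nonneg c)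
        gcongr
        linarith

theorem exists_setIntegral_dissipation_le : ∃ C : ℝ, 0 ≤ C ∧ ∀ {ν a c d : ℝ}
    {U V : Fin 3 → R3 → ℝ} {Θ p : R3 → ℝ}, ViscousTCM ν U V Θ p → 0 ≤ ν → 0 < a → a ≤ c →
      AnnulusBounds U V Θ a c d →
      ν * ∫ x in closedBall 0 1, dissipation U V Θ x ≤ C * (ν * c ^ 2 + a * c ^ 2 + d) := by
  obtain ⟨C, hC0, hC⟩ := exists_abs_integral_pressure_flux_le
  set L := ∫ x, |lap cutoff x|
  set G := ∑ j, ∫ x, |pd cutoff j x|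
  have : 0 ≤ L := integral_nonneg fun x => abs_nonneg _
  have : 0 ≤ G := Finset.sum_nonneg fun j _ => integral_nonneg fun x => abs_nonneg _
  refine ⟨7 / 2 * L + 7 * G + C, by positivity, ?_⟩
  intro ν a c d U V Θ p h hν ha hac hb
  have hd : 0 ≤ d := (abs_nonneg _).trans
    (hb.baroclinic_mul_temperature 0 (EuclideanSpace.single 0 1) (by constructor <;> norm_num))
  have hνc : 0 ≤ ν * c ^ 2 := mul_nonneg hν (sq_nonneg c)
  have hac2 : 0 ≤ a * c ^ 2 := mul_nonneg ha.le (sq_nonneg c)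
  calc ν * ∫ x in closedBall 0 1, dissipation U V Θ x
      ≤ ν * ∫ x, dissipation U V Θ x * cutoff x := by
        gcongr
        exact h.setIntegral_dissipation_le
    _ ≤ 7 / 2 * L * (ν * c ^ 2) + 7 * G * (a * c ^ 2 + d) + C * (ν * c ^ 2 + a * c ^ 2) := by
        rw [h.integral_dissipation_mul smooth_cutoff hasCompactSupport_cutoff]
        exact add_le_add (hb.integral_energy_add_flux_le hν hac)
          ((le_abs_self _).trans (hC h hν ha hac hb))
    _ ≤ (7 / 2 * L + 7 * G + C) * (ν * c ^ 2 + a * c ^ 2 + d) := by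
        rw [add_mul, add_mul]
        gcongr _ * ?_ + _ * ?_ + _ * ?_ <;> linarith

/-! ### Rescaling and the limit `R → ∞` -/

namespace ViscousTCM

variable {ν R : ℝ} {U V : Fin 3 → R3 → ℝ} {Θ p : R3 → ℝ}

lemma rescale (h : ViscousTCM ν U V Θ p) (hR : R ≠ 0) :
    ViscousTCM (ν / R) (fun i x => U i (R • x)) (fun i x => V i (R • x)) (fun x => Θ (R • x))
      (fun x => p (R • x)) := by
  have hsmooth {f : R3 → ℝ} (hf : Smooth f) : Smooth fun x => f (R • x) :=
    hf.comp (contDiff_const_smul R)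
  have hlap {f : R3 → ℝ} (hf : Smooth f) (x : R3) :
      ν / R * lap (fun y => f (R • y)) x = R * (ν * lap f (R • x)) := by
    rw [lap_comp_smul hf]
    field_simp
  have hVV (i j : Fin 3) (x : R3) : pd (fun y => V j (R • y) * V i (R • y)) j x
      = R * pd (fun y => V j y * V i y) j (R • x) := pd_comp_smul (fun y => V j y * V i y) R j x
  refine ⟨fun i => hsmooth (h.smooth_barotropic i), fun i => hsmooth (h.smooth_baroclinic i),
    hsmooth h.smooth_temperature, hsmooth h.smooth_pressure, fun i x => ?_, fun i x => ?_,
    fun x => ?_, fun x => ?_⟩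
  · simp only [hlap (h.smooth_barotropic i), h.barotropic, pd_comp_smul, hVV, mul_add,
      Finset.mul_sum, mul_left_comm]
  · simp only [hlap (h.smooth_baroclinic i), h.baroclinic, pd_comp_smul, mul_add, Finset.mul_sum,
      mul_left_comm]
  · simp only [hlap h.smooth_temperature, h.temperature, pd_comp_smul, mul_add, Finset.mul_sum,
      mul_left_comm]
  · simp only [pd_comp_smul, ← Finset.mul_sum, h.div_barotropic, mul_zero]

end ViscousTCM

lemma dissipation_comp_smul (U V : Fin 3 → R3 → ℝ) (Θ : R3 → ℝ) (R : ℝ) (x : R3) :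
    dissipation (fun i y => U i (R • y)) (fun i y => V i (R • y)) (fun y => Θ (R • y)) x
      = R ^ 2 * dissipation U V Θ (R • x) := by
  simp only [dissipation, gradSq_comp_smul, ← Finset.mul_sum, mul_add]

theorem exists_setIntegral_dissipation_closedBall_le : ∃ C : ℝ, 0 ≤ C ∧ ∀ {R a c d : ℝ}
    {U V : Fin 3 → R3 → ℝ} {Θ p : R3 → ℝ}, ViscousTCM 1 U V Θ p → 0 < R → 0 < a → a ≤ c →
      AnnulusBounds (fun i x => U i (R • x)) (fun i x => V i (R • x)) (fun x => Θ (R • x)) a c d →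
      ∫ x in closedBall 0 R, dissipation U V Θ x
        ≤ C * (R ^ 2 * (R⁻¹ * c ^ 2 + a * c ^ 2 + d)) := by
  obtain ⟨C, hC0, hC⟩ := exists_setIntegral_dissipation_le
  refine ⟨C, hC0, ?_⟩
  intro R a c d U V Θ p h hR ha hac hb
  have unit_scale := hC (h.rescale hR.ne') (by positivity) ha hac hb
  simp only [dissipation_comp_smul, integral_const_mul] at unit_scale
  rw [Measure.setIntegral_comp_smul _ _ _ hR.ne', finrank_euclideanSpace_fin,
    _root_.smul_closedBall _ _ zero_le_one, smul_zero, Real.norm_of_nonneg hR.le, mul_one,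
    abs_of_pos (by positivity), smul_eq_mul] at unit_scale
  calc ∫ x in closedBall 0 R, dissipation U V Θ x
      = R ^ 2 * (1 / R * (R ^ 2 * ((R ^ 3)⁻¹ * ∫ x in closedBall 0 R, dissipation U V Θ x))) := by
        field_simp
    _ ≤ R ^ 2 * (C * (1 / R * c ^ 2 + a * c ^ 2 + d)) := by gcongr
    _ = _ := by ring

lemma eventually_norm_comp_smul_le {E F : Type*} [NormedAddCommGroup E] [NormedSpace ℝ E]
    [SeminormedAddCommGroup F] {f : E → F} {c κ r : ℝ} (hκ : 0 ≤ κ) (hr : 0 < r)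
    (hf : Asymptotics.IsBigOWith c (Bornology.cobounded E) f fun x => ‖x‖ ^ (-κ)) (hc : 0 ≤ c) :
    ∀ᶠ R : ℝ in atTop, ∀ x : E, r ≤ ‖x‖ → ‖f (R • x)‖ ≤ c * (r * R) ^ (-κ) := by
  obtain ⟨K, -, hK⟩ := (hasBasis_cobounded_norm.eventually_iff).1 hf.bound
  filter_upwards [eventually_ge_atTop (K / r), eventually_gt_atTop 0] with R hRK hR x hx
  have hnorm : r * R ≤ ‖R • x‖ := by
    rw [norm_smul, Real.norm_of_nonneg hR.le, mul_comm]
    gcongr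
  have hKR : K ≤ r * R := by rwa [div_le_iff₀' hr] at hRK
  calc ‖f (R • x)‖ ≤ c * ‖‖R • x‖ ^ (-κ)‖ := hK (hKR.trans hnorm)
    _ ≤ c * (r * R) ^ (-κ) := by
        rw [Real.norm_of_nonneg (by positivity)]
        exact mul_le_mul_of_nonneg_left
          (Real.rpow_le_rpow_of_nonpos (by positivity) hnorm (neg_nonpos.2 hκ)) hc

lemma eq_zero_of_tendsto_setIntegral_closedBall {E : Type*} [NormedAddCommGroup E] [ProperSpace E]
    [MeasurableSpace E] [BorelSpace E] {μ : Measure E} [IsFiniteMeasureOnCompacts μ]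
    [μ.IsOpenPosMeasure] {f : E → ℝ} (hf : Continuous f) (hf0 : ∀ x, 0 ≤ f x)
    (hlim : Tendsto (fun R => ∫ x in closedBall 0 R, f x ∂μ) atTop (𝓝 0)) (x : E) : f x = 0 := by
  have hint (R : ℝ) : IntegrableOn f (closedBall 0 R) μ :=
    hf.continuousOn.integrableOn_compact (isCompact_closedBall 0 R)
  have hball (r : ℝ) : ∫ x in ball 0 r, f x ∂μ = 0 := by
    refine le_antisymm (ge_of_tendsto hlim ?_) (integral_nonneg hf0)
    filter_upwards [eventually_ge_atTop r] with R hR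
    exact setIntegral_mono_set (hint R) (.of_forall hf0)
      ((ball_subset_ball hR).trans ball_subset_closedBall).eventuallyLE
  have hae : f =ᵐ[μ.restrict (ball 0 (‖x‖ + 1))] 0 :=
    (setIntegral_eq_zero_iff_of_nonneg_ae (.of_forall hf0)
      ((hint _).mono_set ball_subset_closedBall)).1 (hball _)
  exact Measure.eqOn_open_of_ae_eq hae isOpen_ball hf.continuousOn continuousOn_const
    (mem_ball_zero_iff.2 (lt_add_one _))

lemma tendsto_norm_rpow_neg_cobounded {E : Type*} [SeminormedAddCommGroup E] {κ : ℝ}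
    (hκ : 0 < κ) : Tendsto (fun x : E => ‖x‖ ^ (-κ)) (Bornology.cobounded E) (𝓝 0) :=
  (tendsto_rpow_neg_atTop hκ).comp tendsto_norm_cobounded_atTop

lemma eq_zero_of_gradSq_eq_zero {f : R3 → ℝ} (hf : Smooth f) (hgrad : ∀ x, gradSq f x = 0)
    (hlim : Tendsto f (Bornology.cobounded R3) (𝓝 0)) (x : R3) : f x = 0 := by
  have hconst : f = fun _ => f x := funext fun y =>
    is_const_of_fderiv_eq_zero (𝕜 := ℝ) (hf.differentiable (by simp))
      (fun z => fderiv_eq_zero_of_pd_eq_zero (pd_eq_zero_of_gradSq_eq_zero (hgrad z))) y x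
  rw [hconst] at hlim
  exact tendsto_nhds_unique tendsto_const_nhds hlim

lemma gradSq_eq_zero_of_dissipation_eq_zero {U V : Fin 3 → R3 → ℝ} {Θ : R3 → ℝ} {x : R3}
    (h : dissipation U V Θ x = 0) :
    (∀ i, gradSq (U i) x = 0) ∧ (∀ i, gradSq (V i) x = 0) ∧ gradSq Θ x = 0 := by
  have hU : ∀ i ∈ Finset.univ, 0 ≤ gradSq (U i) x := fun i _ => gradSq_nonneg _ _
  have hV : ∀ i ∈ Finset.univ, 0 ≤ gradSq (V i) x := fun i _ => gradSq_nonneg _ _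
  have hUV := add_nonneg (Finset.sum_nonneg hU) (Finset.sum_nonneg hV)
  rw [dissipation, add_eq_zero_iff_of_nonneg hUV (gradSq_nonneg Θ x),
    add_eq_zero_iff_of_nonneg (Finset.sum_nonneg hU) (Finset.sum_nonneg hV),
    Finset.sum_eq_zero_iff_of_nonneg hU, Finset.sum_eq_zero_iff_of_nonneg hV] at h
  simpa [and_assoc] using h

/-! ### The Liouville theorem -/

section Liouville

variable {u v : R3 → R3} {pr θ : R3 → ℝ}

lemma TCM.viscousTCM (hu : ContDiff ℝ ∞ u) (hv : ContDiff ℝ ∞ v) (hpr : Smooth pr)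
    (hθ : Smooth θ) (hsol : TCM u v pr θ) :
    ViscousTCM 1 (fun i x => u x i) (fun i x => v x i) θ pr := by
  obtain ⟨hbarotropic, hbaroclinic, htemperature, hdiv⟩ := hsol
  refine ⟨contDiff_euclidean.1 hu, contDiff_euclidean.1 hv, hθ, hpr, fun i x => ?_, fun i x => ?_,
    fun x => ?_, hdiv⟩
  · linarith only [hbarotropic i x]
  · linarith only [hbaroclinic i x]
  · linarith only [htemperature x]

lemma eventually_annulusBounds_comp_smul {ε M : ℝ} (hε : 0 ≤ ε) (hM : 0 ≤ M)
    (hu : Asymptotics.IsBigOWith ε (Bornology.cobounded R3) u fun x => ‖x‖ ^ (-(2 / 3) : ℝ))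
    (hv : Asymptotics.IsBigOWith M (Bornology.cobounded R3) v fun x => ‖x‖ ^ (-(2 / 3) : ℝ))
    (hθ : Asymptotics.IsBigOWith M (Bornology.cobounded R3) θ fun x => ‖x‖ ^ (-(2 / 3) : ℝ))
    (hθv : Asymptotics.IsBigOWith ε (Bornology.cobounded R3) (fun x => θ x • v x)
      fun x => ‖x‖ ^ (-2 : ℝ)) :
    ∀ᶠ R : ℝ in atTop, AnnulusBounds (fun i x => u (R • x) i) (fun i x => v (R • x) i)
      (fun x => θ (R • x)) (ε * (1 / 4 * R) ^ (-(2 / 3) : ℝ)) (M * (1 / 4 * R) ^ (-(2 / 3) : ℝ))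
      (ε * (1 / 4 * R) ^ (-2 : ℝ)) := by
  have quarter : (0 : ℝ) < 1 / 4 := by norm_num
  filter_upwards [eventually_norm_comp_smul_le (by norm_num) quarter hu hε,
    eventually_norm_comp_smul_le (by norm_num) quarter hv hM,
    eventually_norm_comp_smul_le (by norm_num) quarter hθ hM,
    eventually_norm_comp_smul_le (by norm_num) quarter hθv hε] with R hu hv hθ hθv
  refine ⟨fun i x hx => (PiLp.norm_apply_le _ i).trans (hu x hx.1),
    fun i x hx => (PiLp.norm_apply_le _ i).trans (hv x hx.1), fun x hx => hθ x hx.1,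
    fun i x hx => ?_⟩
  rw [mul_comm]
  exact (PiLp.norm_apply_le (θ (R • x) • v (R • x)) i).trans (hθv x hx.1)

/-- At scale `R = 4 ρ` the decay exponent `2/3` is critical: the cubic terms of the local energy
estimate stay bounded and are small only through `ε`, whereas the viscous term decays. -/
lemma sq_mul_scaled_bound_eq {ρ : ℝ} (hρ : 0 < ρ) (ε M : ℝ) :
    (4 * ρ) ^ 2 * ((4 * ρ)⁻¹ * (M * ρ ^ (-(2 / 3) : ℝ)) ^ 2
        + ε * ρ ^ (-(2 / 3) : ℝ) * (M * ρ ^ (-(2 / 3) : ℝ)) ^ 2 + ε * ρ ^ (-2 : ℝ))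
      = 4 * M ^ 2 * ρ ^ (-(1 / 3) : ℝ) + 16 * (M ^ 2 + 1) * ε := by
  have viscous : ρ * (ρ ^ (-(2 / 3) : ℝ)) ^ 2 = ρ ^ (-(1 / 3) : ℝ) := by
    rw [← Real.rpow_mul_natCast hρ.le, ← Real.rpow_one_add' hρ.le (by norm_num)]
    norm_num
  have convective : ρ ^ 2 * (ρ ^ (-(2 / 3) : ℝ)) ^ 3 = 1 := by
    rw [← Real.rpow_mul_natCast hρ.le, ← Real.rpow_natCast ρ 2, ← Real.rpow_add hρ]
    norm_num
  have temperature : ρ ^ 2 * ρ ^ (-2 : ℝ) = 1 := by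
    rw [← Real.rpow_natCast ρ 2, ← Real.rpow_add hρ]
    norm_num
  calc _ = 4 * M ^ 2 * (ρ * (ρ ^ (-(2 / 3) : ℝ)) ^ 2)
        + 16 * ε * (M ^ 2 * (ρ ^ 2 * (ρ ^ (-(2 / 3) : ℝ)) ^ 3) + ρ ^ 2 * ρ ^ (-2 : ℝ)) := by
        field_simp
        ring
    _ = _ := by
        rw [viscous, convective, temperature]
        ring

lemma exists_eventually_setIntegral_dissipation_le
    (h : ViscousTCM 1 (fun i x => u x i) (fun i x => v x i) θ pr)
    (hu : u =o[Bornology.cobounded R3] fun x => ‖x‖ ^ (-(2 / 3) : ℝ))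
    (hv : v =O[Bornology.cobounded R3] fun x => ‖x‖ ^ (-(2 / 3) : ℝ))
    (hθ : θ =O[Bornology.cobounded R3] fun x => ‖x‖ ^ (-(2 / 3) : ℝ))
    (hθv : (fun x => θ x • v x) =o[Bornology.cobounded R3] fun x => ‖x‖ ^ (-2 : ℝ)) :
    ∃ C : ℝ, 0 ≤ C ∧ ∀ ε, 0 < ε → ε ≤ 1 → ∀ᶠ R : ℝ in atTop,
      ∫ x in closedBall 0 R, dissipation (fun i x => u x i) (fun i x => v x i) θ x
        ≤ C * ((1 / 4 * R) ^ (-(1 / 3) : ℝ) + ε) := by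
  obtain ⟨C, hC0, hC⟩ := exists_setIntegral_dissipation_closedBall_le
  obtain ⟨Mv, hMv⟩ := hv.isBigOWith
  obtain ⟨Mθ, hMθ⟩ := hθ.isBigOWith
  set M := max 1 (max Mv Mθ)
  have hM : 1 ≤ M := le_max_left _ _
  refine ⟨C * (16 * (M ^ 2 + 1)), by positivity, fun ε hε hε1 => ?_⟩
  filter_upwards [eventually_annulusBounds_comp_smul hε.le (by linarith) (hu.forall_isBigOWith hε)
    (hMv.weaken ((le_max_left _ _).trans (le_max_right _ _)))
    (hMθ.weaken ((le_max_right _ _).trans (le_max_right _ _))) (hθv.forall_isBigOWith hε),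
    eventually_gt_atTop 0] with R hb hR
  set ρ := 1 / 4 * R
  have hρ : 0 < ρ := by positivity
  have hRρ : R = 4 * ρ := by ring
  have hεM : ε * ρ ^ (-(2 / 3) : ℝ) ≤ M * ρ ^ (-(2 / 3) : ℝ) := by
    gcongr
    exact hε1.trans hM
  refine (hC h hR (by positivity) hεM hb).trans ?_
  rw [hRρ, sq_mul_scaled_bound_eq hρ, mul_assoc C]
  refine mul_le_mul_of_nonneg_left ?_ hC0
  nlinarith [Real.rpow_nonneg hρ.le (-(1 / 3)),
    mul_nonneg (sq_nonneg M) (Real.rpow_nonneg hρ.le (-(1 / 3)))]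

theorem tendsto_setIntegral_dissipation
    (h : ViscousTCM 1 (fun i x => u x i) (fun i x => v x i) θ pr)
    (hu : u =o[Bornology.cobounded R3] fun x => ‖x‖ ^ (-(2 / 3) : ℝ))
    (hv : v =O[Bornology.cobounded R3] fun x => ‖x‖ ^ (-(2 / 3) : ℝ))
    (hθ : θ =O[Bornology.cobounded R3] fun x => ‖x‖ ^ (-(2 / 3) : ℝ))
    (hθv : (fun x => θ x • v x) =o[Bornology.cobounded R3] fun x => ‖x‖ ^ (-2 : ℝ)) :
    Tendsto (fun R => ∫ x in closedBall 0 R, dissipation (fun i x => u x i) (fun i x => v x i) θ x)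
      atTop (𝓝 0) := by
  obtain ⟨C, hC0, hC⟩ := exists_eventually_setIntegral_dissipation_le h hu hv hθ hθv
  refine tendsto_order.2 ⟨fun b hb => .of_forall fun R =>
    hb.trans_le (integral_nonneg (dissipation_nonneg _ _ _)), fun δ hδ => ?_⟩
  obtain ⟨ε, hε, hεδ⟩ := exists_pos_mul_lt hδ C
  have hlim : Tendsto (fun R : ℝ => C * ((1 / 4 * R) ^ (-(1 / 3) : ℝ) + min 1 ε)) atTop
      (𝓝 (C * (0 + min 1 ε))) :=
    (((tendsto_rpow_neg_atTop (by norm_num)).comp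
      (tendsto_id.const_mul_atTop (by norm_num))).add_const _).const_mul _
  have hlt : C * (0 + min 1 ε) < δ := by
    rw [zero_add]
    exact (mul_le_mul_of_nonneg_left (min_le_right 1 ε) hC0).trans_lt hεδ
  filter_upwards [hC _ (lt_min one_pos hε) (min_le_left 1 ε), hlim.eventually_lt_const hlt]
    with R hle hRlt using hle.trans_lt hRlt

theorem liouville_tcm_C3_general (hu : ContDiff ℝ ∞ u) (hv : ContDiff ℝ ∞ v) (hpr : Smooth pr)
    (hθ : Smooth θ) (hsol : TCM u v pr θ)
    (hu_decay : u =o[Bornology.cobounded R3] fun x => ‖x‖ ^ (-(2 / 3) : ℝ))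
    (hv_decay : v =O[Bornology.cobounded R3] fun x => ‖x‖ ^ (-(2 / 3) : ℝ))
    (hθ_decay : θ =O[Bornology.cobounded R3] fun x => ‖x‖ ^ (-(2 / 3) : ℝ))
    (hθv_decay : (fun x => θ x • v x) =o[Bornology.cobounded R3] fun x => ‖x‖ ^ (-2 : ℝ)) :
    (∀ x, u x = 0) ∧ (∀ x, v x = 0) ∧ (∀ x, θ x = 0) := by
  have h := hsol.viscousTCM hu hv hpr hθ
  have hgrad (x : R3) := gradSq_eq_zero_of_dissipation_eq_zero <|
    eq_zero_of_tendsto_setIntegral_closedBall h.continuous_dissipation (dissipation_nonneg _ _ _)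
      (tendsto_setIntegral_dissipation h hu_decay hv_decay hθ_decay hθv_decay) x
  have hdecay : Tendsto (fun x : R3 => ‖x‖ ^ (-(2 / 3) : ℝ)) (Bornology.cobounded R3) (𝓝 0) :=
    tendsto_norm_rpow_neg_cobounded (by norm_num)
  have coord {w : R3 → R3} (hw : Tendsto w (Bornology.cobounded R3) (𝓝 0)) (i : Fin 3) :
      Tendsto (fun x => w x i) (Bornology.cobounded R3) (𝓝 0) :=
    ((EuclideanSpace.proj (𝕜 := ℝ) i).continuous.tendsto 0).comp hw
  refine ⟨fun x => ?_, fun x => ?_, eq_zero_of_gradSq_eq_zero hθ (fun x => (hgrad x).2.2)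
    (hθ_decay.trans_tendsto hdecay)⟩
  · ext i
    exact eq_zero_of_gradSq_eq_zero (h.smooth_barotropic i) (fun x => (hgrad x).1 i)
      (coord (hu_decay.trans_tendsto hdecay) i) x
  · ext i
    exact eq_zero_of_gradSq_eq_zero (h.smooth_baroclinic i) (fun x => (hgrad x).2.1 i)
      (coord (hv_decay.trans_tendsto hdecay) i) x

end Liouville

section Decay

variable {E F : Type*} [NormedAddCommGroup E] [SeminormedAddCommGroup F] {f : E → F} {κ : ℝ}

lemma isLittleO_norm_rpow_neg_of_forall_lt
    (h : ∀ ε > 0, ∃ K : ℝ, ∀ x : E, K ≤ ‖x‖ → ‖x‖ ^ κ * ‖f x‖ < ε) :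
    f =o[Bornology.cobounded E] fun x => ‖x‖ ^ (-κ) := by
  refine Asymptotics.IsLittleO.of_bound fun ε hε => ?_
  obtain ⟨K, hK⟩ := h ε hε
  filter_upwards [tendsto_norm_cobounded_atTop.eventually_ge_atTop K,
    tendsto_norm_cobounded_atTop.eventually_gt_atTop 0] with x hKx hx
  rw [Real.norm_of_nonneg (by positivity), Real.rpow_neg hx.le, ← div_eq_mul_inv,
    le_div_iff₀' (by positivity)]
  exact (hK x hKx).le

lemma isBigO_norm_rpow_neg_of_forall_le {M K : ℝ}
    (h : ∀ x : E, K ≤ ‖x‖ → ‖x‖ ^ κ * ‖f x‖ ≤ M) :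
    f =O[Bornology.cobounded E] fun x => ‖x‖ ^ (-κ) := by
  refine Asymptotics.IsBigO.of_bound M ?_
  filter_upwards [tendsto_norm_cobounded_atTop.eventually_ge_atTop K,
    tendsto_norm_cobounded_atTop.eventually_gt_atTop 0] with x hKx hx
  rw [Real.norm_of_nonneg (by positivity), Real.rpow_neg hx.le, ← div_eq_mul_inv,
    le_div_iff₀' (by positivity)]
  exact h x hKx

lemma norm_rpow_isBigO_norm_rpow_cobounded {s t : ℝ} (hst : s ≤ t) :
    (fun x : E => ‖x‖ ^ s) =O[Bornology.cobounded E] fun x => ‖x‖ ^ t := by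
  refine Asymptotics.IsBigO.of_bound' ?_
  filter_upwards [tendsto_norm_cobounded_atTop.eventually_ge_atTop 1] with x hx
  rw [Real.norm_of_nonneg (by positivity), Real.norm_of_nonneg (by positivity)]
  exact Real.rpow_le_rpow_of_exponent_le hx hst

lemma norm_rpow_mul_norm_rpow_eventuallyEq_cobounded {r s t : ℝ} (h : s + t = r) :
    (fun x : E => ‖x‖ ^ s * ‖x‖ ^ t) =ᶠ[Bornology.cobounded E] fun x => ‖x‖ ^ r := by
  filter_upwards [tendsto_norm_cobounded_atTop.eventually_gt_atTop 0] with x hx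
  rw [← h, Real.rpow_add hx]

end Decay

theorem liouville_tcm_C3 (u v : R3 → R3) (pr θ : R3 → ℝ)
    (hu : ContDiff ℝ (⊤ : ℕ∞) u) (hv : ContDiff ℝ (⊤ : ℕ∞) v)
    (hpr : ContDiff ℝ (⊤ : ℕ∞) pr) (hθ : ContDiff ℝ (⊤ : ℕ∞) θ)
    (hsol : TCM u v pr θ)
    (hu_decay : ∀ ε > 0, ∃ K : ℝ, ∀ x : R3, K ≤ ‖x‖ → ‖x‖ ^ (2 / 3 : ℝ) * ‖u x‖ < ε)
    (hv_decay : ∃ M K : ℝ, 0 < M ∧ 0 < K ∧ ∀ x : R3, K ≤ ‖x‖ → ‖x‖ ^ (4 / 3 : ℝ) * ‖v x‖ ≤ M)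
    (hθ_decay : ∀ ε > 0, ∃ K : ℝ, ∀ x : R3, K ≤ ‖x‖ → ‖x‖ ^ (2 / 3 : ℝ) * |θ x| < ε) :
    (∀ x, u x = 0) ∧ (∀ x, v x = 0) ∧ (∀ x, θ x = 0) := by
  obtain ⟨M, K, -, -, hv_decay⟩ := hv_decay
  have hvO := isBigO_norm_rpow_neg_of_forall_le hv_decay
  have hθo := isLittleO_norm_rpow_neg_of_forall_lt (f := θ) hθ_decay
  have hθvo := (hθo.smul_isBigO hvO).trans_eventuallyEq
    (norm_rpow_mul_norm_rpow_eventuallyEq_cobounded (r := -2) (by norm_num))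
  exact liouville_tcm_C3_general hu hv hpr hθ hsol (isLittleO_norm_rpow_neg_of_forall_lt hu_decay)
    (hvO.trans (norm_rpow_isBigO_norm_rpow_cobounded (by norm_num))) hθo.isBigO hθvo
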